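/- arXiv:1708.09030 — 4 statements merged into one kernel-verified Lean document; each statement's English description precedes it below -/
import Mathlib

section
/- Let T ⊂ ℝ^d be compact and {f(t) : t ∈ T} a centered, unit-variance, almost surely continuous Gaussian random field whose correlation function r(s,t) = E[f(s)f(t)] satisfies |r(t,s) − r(t',s')| ≤ κ_H'(|t−t'|^{β'} + |s−s'|^{β'}). Let β* = min(β, β') and, for ε_0 > 0, set N_0(ε, b) = b^{(2/β*)(3d/β* + 2 + ε_0)} · ε^{−(2/β* + ε_0)}. Then for any ε_0 > 0 there exists b_0 such that for every ε ∈ (0,1), every b > b_0, and every N ≥ N_0(ε, b), the relative discretization bias satisfies | w_{σ,μ,N}(b) − w_{σ,μ}(b) | / w_{σ,μ}(b) < ε, uniformly over all (σ, μ) in the class C(μ_l, μ_u, σ_l, σ_u, β, κ_H). -/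
open MeasureTheory ProbabilityTheory Filter Set

/-- The lattice discretization `T_N = {(i₁/N, …, i_d/N) : i_j ∈ ℤ} ∩ T`. -/
def latticePoints (d : ℕ) (T : Set (EuclideanSpace ℝ (Fin d))) (N : ℕ) :
    Set (EuclideanSpace ℝ (Fin d)) :=
  {u ∈ T | ∀ j : Fin d, ∃ z : ℤ, u j = (z : ℝ) / N}

/-- The standard Gaussian density is bounded by `exp (-a ^ 2 / 2)` to the right of `a ≥ 0`. -/
lemma gaussianPDFReal_zero_one_le {a x : ℝ} (ha : 0 ≤ a) (hx : a ≤ x) :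
    gaussianPDFReal 0 1 x ≤ Real.exp (-a ^ 2 / 2) := by
  have h1 : (1 : ℝ) ≤ √(2 * Real.pi * (1 : NNReal)) := by
    rw [Real.one_le_sqrt]; push_cast; nlinarith [Real.pi_gt_three]
  have h2 : Real.exp (-(x - 0) ^ 2 / (2 * (1 : NNReal))) ≤ Real.exp (-a ^ 2 / 2) := by
    apply Real.exp_le_exp.2; push_cast; nlinarith
  calc gaussianPDFReal 0 1 x ≤ 1 * Real.exp (-(x - 0) ^ 2 / (2 * (1 : NNReal))) := by
        rw [gaussianPDFReal]; gcongr; exact inv_le_one_of_one_le₀ h1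
    _ ≤ _ := by simpa using h2

/-- Comparison of the standard Gaussian density at two nearby points. -/
lemma gaussianPDFReal_zero_one_le_exp_mul {L b u v : ℝ} (hL : 0 ≤ L) (hb : 1 ≤ b) (huv : u ≤ v)
    (hvu : v - u ≤ 2 / b) (hu : u + v ≤ 2 * L * b + 3) :
    gaussianPDFReal 0 1 u ≤ Real.exp (2 * L + 3) * gaussianPDFReal 0 1 v := by
  simp only [gaussianPDFReal]
  rw [mul_left_comm, ← Real.exp_add]
  gcongr
  push_cast
  have hb0 : 0 < b := by linarith
  have h1 : (v - u) * (u + v) ≤ 2 / b * (2 * L * b + 3) := by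
    have : (v - u) * (u + v) ≤ (v - u) * (2 * L * b + 3) := by gcongr
    refine this.trans ?_
    gcongr
  have h2 : 2 / b * (2 * L * b + 3) = 4 * L + 6 / b := by field_simp; ring
  have h3 : 6 / b ≤ 6 := div_le_self (by norm_num) hb
  nlinarith

lemma gaussianReal_real_apply (s : Set ℝ) :
    (gaussianReal 0 1).real s = ∫ x in s, gaussianPDFReal 0 1 x := by
  rw [measureReal_def, gaussianReal_apply_eq_integral _ one_ne_zero, ENNReal.toReal_ofReal]
  exact integral_nonneg fun x => gaussianPDFReal_nonneg _ _ _

lemma gaussianReal_real_le_of_forall_le {s : Set ℝ} {c : ℝ} (hs : MeasurableSet s)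
    (hs' : volume s ≠ ⊤) (h : ∀ x ∈ s, gaussianPDFReal 0 1 x ≤ c) :
    (gaussianReal 0 1).real s ≤ c * volume.real s := by
  rw [gaussianReal_real_apply]
  calc ∫ x in s, gaussianPDFReal 0 1 x ≤ ∫ _ in s, c :=
        setIntegral_mono_on (integrable_gaussianPDFReal _ _).integrableOn
          (integrableOn_const hs') hs h
    _ = _ := by simp [mul_comm]

lemma le_gaussianReal_real_of_forall_le {s : Set ℝ} {c : ℝ} (hs : MeasurableSet s)
    (hs' : volume s ≠ ⊤) (h : ∀ x ∈ s, c ≤ gaussianPDFReal 0 1 x) :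
    c * volume.real s ≤ (gaussianReal 0 1).real s := by
  rw [gaussianReal_real_apply]
  calc c * volume.real s = ∫ _ in s, c := by simp [mul_comm]
    _ ≤ _ := setIntegral_mono_on (integrableOn_const hs')
          (integrable_gaussianPDFReal _ _).integrableOn hs h

/-- A hazard rate bound for the standard Gaussian measure, with an error term which absorbs
intervals located far to the right. -/
lemma gaussianReal_real_Icc_le {L b h : ℝ} (hL : 0 ≤ L) (hb : 1 ≤ b) (hh : 0 ≤ h)
    (hhb : h ≤ 1 / b) (x : ℝ) :
    (gaussianReal 0 1).real (Icc x (x + h)) ≤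
      Real.exp (2 * L + 3) * b * h * (gaussianReal 0 1).real (Ioi (x + h)) +
        h * Real.exp (-(L * b) ^ 2 / 2) := by
  have hb0 : 0 < b := by linarith
  have hvol : volume.real (Icc x (x + h)) = h := by simp [measureReal_def, hh]
  rcases le_total x (L * b) with hx | hx
  · have h1b : 1 / b ≤ 1 := by rw [div_le_one hb0]; exact hb
    have key : ∀ v ∈ Ioc (x + h) (x + h + 1 / b),
        Real.exp (-(2 * L + 3)) * ((gaussianReal 0 1).real (Icc x (x + h)) / h) ≤
          gaussianPDFReal 0 1 v := by
      intro v hv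
      have h2 : (gaussianReal 0 1).real (Icc x (x + h)) ≤
          (Real.exp (2 * L + 3) * gaussianPDFReal 0 1 v) * h := by
        rw [← hvol]
        have := gaussianReal_real_le_of_forall_le (s := Icc x (x + h))
          (c := Real.exp (2 * L + 3) * gaussianPDFReal 0 1 v) measurableSet_Icc
          (by simp) ?_
        · simpa [hvol] using this
        · intro u hu
          apply gaussianPDFReal_zero_one_le_exp_mul hL hb
          · linarith [hu.2, hv.1]
          · have : 2 / b = 1 / b + 1 / b := by ring
            linarith [hu.1, hv.2]
          · linarith [hu.2, hv.2]
      have h3 : (gaussianReal 0 1).real (Icc x (x + h)) / h ≤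
          Real.exp (2 * L + 3) * gaussianPDFReal 0 1 v :=
        div_le_of_le_mul₀ hh (mul_nonneg (Real.exp_pos _).le (gaussianPDFReal_nonneg _ _ _)) h2
      calc _ ≤ Real.exp (-(2 * L + 3)) * (Real.exp (2 * L + 3) * gaussianPDFReal 0 1 v) := by
            gcongr
        _ = _ := by rw [← mul_assoc, ← Real.exp_add]; simp
    have h4 := le_gaussianReal_real_of_forall_le measurableSet_Ioc (by simp) key
    have h5 : volume.real (Ioc (x + h) (x + h + 1 / b)) = 1 / b := by
      rw [measureReal_def, Real.volume_Ioc, ENNReal.toReal_ofReal] <;> simp [hb0.le]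
    rw [h5] at h4
    have h6 : (gaussianReal 0 1).real (Ioc (x + h) (x + h + 1 / b)) ≤
        (gaussianReal 0 1).real (Ioi (x + h)) := measureReal_mono Ioc_subset_Ioi_self
    have h7 : 0 ≤ h * Real.exp (-(L * b) ^ 2 / 2) := by positivity
    rcases hh.eq_or_lt with rfl | hpos
    · have : (gaussianReal 0 1).real (Icc x (x + 0)) ≤ _ :=
        gaussianReal_real_le_of_forall_le (s := Icc x (x + 0)) measurableSet_Icc (by simp)
          (c := gaussianPDFReal 0 1 x) (by
            intro u hu
            have : u = x := le_antisymm (by simpa using hu.2) hu.1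
            rw [this])
      rw [hvol] at this
      simpa using this
    · have h8 := h4.trans h6
      rw [Real.exp_neg] at h8
      have hE := Real.exp_pos (2 * L + 3)
      have h9 : (gaussianReal 0 1).real (Icc x (x + h)) ≤
          Real.exp (2 * L + 3) * b * h * (gaussianReal 0 1).real (Ioi (x + h)) := by
        have : (gaussianReal 0 1).real (Icc x (x + h)) = Real.exp (2 * L + 3) * b * h *
          ((Real.exp (2 * L + 3))⁻¹ * ((gaussianReal 0 1).real (Icc x (x + h)) / h) * (1 / b)) := by
          field_simp
        rw [this]
        gcongr
      linarith
  · have h1 := gaussianReal_real_le_of_forall_le (s := Icc x (x + h)) measurableSet_Icc (by simp)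
      (c := Real.exp (-(L * b) ^ 2 / 2))
      (fun u hu => gaussianPDFReal_zero_one_le (by positivity) (hx.trans hu.1))
    rw [hvol] at h1
    have : 0 ≤ Real.exp (2 * L + 3) * b * h * (gaussianReal 0 1).real (Ioi (x + h)) := by
      positivity
    linarith

/-- A lower bound for the upper tail of the standard Gaussian measure. -/
lemma exp_le_gaussianReal_real_Ioi {x : ℝ} (hx : 0 ≤ x) :
    Real.exp (-(x + 1) ^ 2 / 2 - 1) ≤ (gaussianReal 0 1).real (Ioi x) := by
  have h1 := le_gaussianReal_real_of_forall_le (s := Ioc x (x + 1))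
    (c := Real.exp (-(x + 1) ^ 2 / 2 - 1)) measurableSet_Ioc (by simp) ?_
  · refine le_trans ?_ (h1.trans (measureReal_mono Ioc_subset_Ioi_self))
    simp [measureReal_def]
  · intro u hu
    have hpi : √(2 * Real.pi * (1 : NNReal)) ≤ Real.exp 1 := by
      rw [Real.sqrt_le_left (Real.exp_pos _).le]
      push_cast
      nlinarith [Real.pi_lt_d2, Real.exp_one_gt_d9]
    rw [gaussianPDFReal, sub_eq_add_neg, Real.exp_add, mul_comm, Real.exp_neg]
    refine mul_le_mul (inv_anti₀ (by positivity) hpi) (Real.exp_le_exp.2 ?_)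
      (Real.exp_pos _).le (by positivity)
    push_cast
    nlinarith [hu.1, hu.2]

/-- If all affine functions `ξ ↦ a u * ξ + c u`, `u ∈ U`, have slope at least `a₀`, the probability
that their maximum at a standard Gaussian point lies in `(b - γ, b]` is controlled by the
probability that it exceeds `b`. -/
lemma gaussianReal_max_affine_le {ι : Type*} (U : Finset ι) (a c : ι → ℝ) {L b γ a₀ : ℝ}
    (ha₀ : 0 < a₀) (ha : ∀ u ∈ U, a₀ ≤ a u) (hL : 0 ≤ L) (hb : 1 ≤ b) (hγ : 0 ≤ γ)
    (hγb : γ / a₀ ≤ 1 / b) :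
    (gaussianReal 0 1).real
        {ξ | (∃ u ∈ U, b - γ < a u * ξ + c u) ∧ ∀ u ∈ U, a u * ξ + c u ≤ b} ≤
      Real.exp (2 * L + 3) * b * (γ / a₀) *
          (gaussianReal 0 1).real {ξ | ∃ u ∈ U, b < a u * ξ + c u} +
        γ / a₀ * Real.exp (-(L * b) ^ 2 / 2) := by
  set S := {ξ | (∃ u ∈ U, b - γ < a u * ξ + c u) ∧ ∀ u ∈ U, a u * ξ + c u ≤ b} with hS
  set h := γ / a₀ with hh
  have hh0 : 0 ≤ h := by positivity
  have hb0 : 0 < b := by linarith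
  rcases S.eq_empty_or_nonempty with hemp | ⟨ξ₀, hξ₀⟩
  · rw [hemp]; simp only [measureReal_empty]; positivity
  have key : ∀ ξ ∈ S, ∀ ξ', ξ + h ≤ ξ' → ∃ u ∈ U, b < a u * ξ' + c u := by
    rintro ξ ⟨⟨u, hu, hlt⟩, -⟩ ξ' hξ'
    refine ⟨u, hu, ?_⟩
    have h1 : a₀ * h = γ := by rw [hh]; field_simp
    have h2 : a₀ * h ≤ a u * (ξ' - ξ) := by
      apply mul_le_mul (ha u hu) (by linarith) hh0 (ha₀.le.trans (ha u hu))
    nlinarith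
  have hlt : ∀ ξ ∈ S, ∀ ξ' ∈ S, ξ' < ξ + h := by
    intro ξ hξ ξ' hξ'
    by_contra! hcon
    obtain ⟨u, hu, hbu⟩ := key ξ hξ ξ' hcon
    exact absurd (hξ'.2 u hu) (not_le.2 hbu)
  have hbdd : BddBelow S := ⟨ξ₀ - h, fun ξ hξ => by linarith [hlt ξ hξ ξ₀ hξ₀]⟩
  set x := sInf S with hx
  have hsub : S ⊆ Icc x (x + h) := by
    intro ξ hξ
    refine ⟨csInf_le hbdd hξ, ?_⟩
    have : ξ - h ≤ x := le_csInf ⟨ξ₀, hξ₀⟩ fun ξ' hξ' => by linarith [hlt ξ' hξ' ξ hξ]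
    linarith
  have hsup : Ioi (x + h) ⊆ {ξ | ∃ u ∈ U, b < a u * ξ + c u} := by
    intro ξ hξ
    obtain ⟨ξ', hξ', hlt'⟩ := exists_lt_of_csInf_lt ⟨ξ₀, hξ₀⟩
      (show sInf S < ξ - h by rw [← hx]; linarith [mem_Ioi.1 hξ])
    exact key ξ' hξ' ξ (by linarith)
  have hmono : (gaussianReal 0 1).real (Ioi (x + h)) ≤
      (gaussianReal 0 1).real {ξ | ∃ u ∈ U, b < a u * ξ + c u} := measureReal_mono hsup
  calc (gaussianReal 0 1).real S ≤ (gaussianReal 0 1).real (Icc x (x + h)) := measureReal_mono hsub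
    _ ≤ _ := gaussianReal_real_Icc_le hL hb hh0 hγb x
    _ ≤ _ := by gcongr

/-- The residual of a Gaussian process after regression on its value at `t₀` is independent of
that value. -/
lemma ProbabilityTheory.IsGaussianProcess.indepFun_residual {Ω ι : Type*}
    {mΩ : MeasurableSpace Ω} {P : Measure Ω}
    {f : ι → Ω → ℝ} (hf : IsGaussianProcess f P) (t₀ : ι) (hvar : Var[f t₀; P] = 1) :
    IndepFun (f t₀) (fun ω u => f u ω - cov[f t₀, f u; P] * f t₀ ω) P := by
  classical
  have := hf.isProbabilityMeasure
  have hLp : ∀ u, MemLp (f u) 2 P := fun u => (hf.hasGaussianLaw_eval u).memLp_two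
  have hproc : IsGaussianProcess (Sum.elim (fun _ : Unit => f t₀)
      (fun u ω => f u ω - cov[f t₀, f u; P] * f t₀ ω)) P := by
    refine hf.of_isGaussianProcess ?_
    rintro (_ | u)
    · exact ⟨{t₀}, .proj ⟨t₀, by simp⟩, fun ω => by simp⟩
    · exact ⟨{t₀, u}, .proj ⟨u, by simp⟩ - cov[f t₀, f u; P] • .proj ⟨t₀, by simp⟩,
        fun ω => by simp⟩
  have hind := hproc.indepFun_of_covariance_eq_zero (X := fun _ : Unit => f t₀)
    (fun _ => hf.aemeasurable t₀)
    (fun u => (hf.aemeasurable u).sub ((hf.aemeasurable t₀).const_mul _)) ?_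
  · exact hind.comp (φ := fun x : Unit → ℝ => x ()) (ψ := id) (by fun_prop) measurable_id
  · intro _ u
    have : (fun ω => f u ω - cov[f t₀, f u; P] * f t₀ ω) =
        f u - fun ω => cov[f t₀, f u; P] * f t₀ ω := rfl
    rw [this, covariance_sub_right (hLp _) (hLp _) ((hLp _).const_mul _),
      covariance_const_mul_right, covariance_self (hf.aemeasurable t₀), hvar]
    simp

/-- Relative anti-concentration of the maximum of a Gaussian process over a finite set whose
members are positively correlated with a fixed member. -/
lemma ProbabilityTheory.IsGaussianProcess.real_max_mem_Ioc_le {Ω ι : Type*} {mΩ : MeasurableSpace Ω}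
    {P : Measure Ω} {f : ι → Ω → ℝ} (hf : IsGaussianProcess f P) (hmeas : ∀ u, Measurable (f u))
    (t₀ : ι) (hlaw : P.map (f t₀) = gaussianReal 0 1) (U : Finset ι) (σ μ : ι → ℝ)
    {L b γ a₀ : ℝ} (ha₀ : 0 < a₀) (hσ : ∀ u ∈ U, a₀ ≤ σ u * cov[f t₀, f u; P])
    (hL : 0 ≤ L) (hb : 1 ≤ b) (hγ : 0 ≤ γ) (hγb : γ / a₀ ≤ 1 / b) :
    P.real {ω | (∃ u ∈ U, b - γ < σ u * f u ω + μ u) ∧ ∀ u ∈ U, σ u * f u ω + μ u ≤ b} ≤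
      Real.exp (2 * L + 3) * b * (γ / a₀) * P.real {ω | ∃ u ∈ U, b < σ u * f u ω + μ u} +
        γ / a₀ * Real.exp (-(L * b) ^ 2 / 2) := by
  have := hf.isProbabilityMeasure
  have hb0 : 0 < b := by linarith
  set r : ι → ℝ := fun u => cov[f t₀, f u; P] with hr
  set g : Ω → ι → ℝ := fun ω u => f u ω - r u * f t₀ ω with hg
  have hgm : Measurable g := by fun_prop
  have hvar : Var[f t₀; P] = 1 := by
    have h1 := variance_map (μ := P) (X := id) (Y := f t₀) (by fun_prop) (by fun_prop)
    rw [hlaw, variance_id_gaussianReal] at h1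
    simpa using h1.symm
  have hind : IndepFun (f t₀) g P := hf.indepFun_residual t₀ hvar
  have hmap : P.map (fun ω => (f t₀ ω, g ω)) = (gaussianReal 0 1).prod (P.map g) := by
    rw [← hlaw]
    exact (indepFun_iff_map_prod_eq_prod_map_map (by fun_prop) (by fun_prop)).1 hind
  have := Measure.isProbabilityMeasure_map (μ := P) hgm.aemeasurable
  let val : ι → ℝ × (ι → ℝ) → ℝ := fun u p => σ u * r u * p.1 + (σ u * p.2 u + μ u)
  have hval : ∀ u, Measurable (val u) := fun u => by fun_prop
  have hvalf : ∀ u ω, val u (f t₀ ω, g ω) = σ u * f u ω + μ u := fun u ω => by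
    simp only [val, hg]; ring
  let A : Set (ℝ × (ι → ℝ)) := {p | (∃ u ∈ U, b - γ < val u p) ∧ ∀ u ∈ U, val u p ≤ b}
  let B : Set (ℝ × (ι → ℝ)) := {p | ∃ u ∈ U, b < val u p}
  have hgt : ∀ c : ℝ, MeasurableSet {p | ∃ u ∈ U, c < val u p} := fun c => by
    have : {p | ∃ u ∈ U, c < val u p} = ⋃ u ∈ U, {p | c < val u p} := by ext; simp
    rw [this]
    exact U.measurableSet_biUnion fun u _ => measurableSet_lt measurable_const (hval u)
  have hB : MeasurableSet B := hgt b
  have hA : MeasurableSet A := by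
    have : A = {p | ∃ u ∈ U, b - γ < val u p} \ B := by ext; simp [A, B]
    rw [this]
    exact (hgt _).diff hB
  have hpair : Measurable (fun ω => (f t₀ ω, g ω)) := by fun_prop
  have hPA : P {ω | (∃ u ∈ U, b - γ < σ u * f u ω + μ u) ∧ ∀ u ∈ U, σ u * f u ω + μ u ≤ b} =
      ∫⁻ c, gaussianReal 0 1 ((fun ξ => (ξ, c)) ⁻¹' A) ∂(P.map g) := by
    rw [← Measure.prod_apply_symm hA, ← hmap, Measure.map_apply hpair hA]
    simp only [A, preimage_ofPred_eq, hvalf]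
  have hPB : P {ω | ∃ u ∈ U, b < σ u * f u ω + μ u} =
      ∫⁻ c, gaussianReal 0 1 ((fun ξ => (ξ, c)) ⁻¹' B) ∂(P.map g) := by
    rw [← Measure.prod_apply_symm hB, ← hmap, Measure.map_apply hpair hB]
    simp only [B, preimage_ofPred_eq, hvalf]
  set K := Real.exp (2 * L + 3) * b * (γ / a₀) with hK
  set e := γ / a₀ * Real.exp (-(L * b) ^ 2 / 2) with he
  have hK0 : 0 ≤ K := by positivity
  have he0 : 0 ≤ e := by positivity
  have hslice : ∀ c : ι → ℝ, gaussianReal 0 1 ((fun ξ => (ξ, c)) ⁻¹' A) ≤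
      ENNReal.ofReal K * gaussianReal 0 1 ((fun ξ => (ξ, c)) ⁻¹' B) + ENNReal.ofReal e := by
    intro c
    have h1 := gaussianReal_max_affine_le U (fun u => σ u * r u) (fun u => σ u * c u + μ u)
      ha₀ hσ hL hb hγ hγb
    rw [← ofReal_measureReal (measure_ne_top _ _), ← ofReal_measureReal (measure_ne_top _ _),
      ← ENNReal.ofReal_mul hK0, ← ENNReal.ofReal_add (by positivity) he0]
    exact ENNReal.ofReal_le_ofReal h1
  have hfin : P {ω | (∃ u ∈ U, b - γ < σ u * f u ω + μ u) ∧ ∀ u ∈ U, σ u * f u ω + μ u ≤ b} ≤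
      ENNReal.ofReal K * P {ω | ∃ u ∈ U, b < σ u * f u ω + μ u} + ENNReal.ofReal e := by
    rw [hPA, hPB]
    refine (lintegral_mono hslice).trans_eq ?_
    rw [lintegral_add_right _ measurable_const,
      lintegral_const_mul _ (measurable_measure_prodMk_right hB)]
    simp
  have := ENNReal.toReal_mono (by finiteness) hfin
  rwa [ENNReal.toReal_add (by finiteness) (by finiteness), ENNReal.toReal_mul,
    ENNReal.toReal_ofReal hK0, ENNReal.toReal_ofReal he0] at this

/-- Relative anti-concentration, uniformly over finite subsets of a compact index set, of the
maximum of a scaled and shifted standardized Gaussian process. -/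
lemma ProbabilityTheory.IsGaussianProcess.exists_real_max_mem_Ioc_le {Ω E : Type*} [PseudoMetricSpace E]
    {mΩ : MeasurableSpace Ω} {P : Measure Ω} {T : Set E} {f : E → Ω → ℝ}
    (hf : IsGaussianProcess (fun u : T => f u) P) (hmeas : ∀ u, Measurable (f u))
    (hlaw : ∀ u ∈ T, P.map (f u) = gaussianReal 0 1) (hT : IsCompact T) {κ β σl L : ℝ}
    (hκ : 0 < κ) (hβ : 0 < β) (hσl : 0 < σl) (hL : 0 ≤ L)
    (hcov : ∀ s ∈ T, ∀ u ∈ T, 1 - cov[f s, f u; P] ≤ κ * dist s u ^ β) :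
    ∃ C > 0, ∀ b γ : ℝ, 1 ≤ b → 0 ≤ γ → C * γ * b ≤ 1 → ∀ S : Finset E, ↑S ⊆ T →
      ∀ σ μ : E → ℝ, (∀ u ∈ T, σl ≤ σ u) →
      P.real {ω | (∃ u ∈ S, b - γ < σ u * f u ω + μ u) ∧ ∀ u ∈ S, σ u * f u ω + μ u ≤ b} ≤
        C * γ * (b * P.real {ω | ∃ u ∈ S, b < σ u * f u ω + μ u} +
          Real.exp (-(L * b) ^ 2 / 2)) := by
  classical
  have := hf.isProbabilityMeasure
  set ρ : ℝ := (2 * κ)⁻¹ ^ β⁻¹ with hρ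
  have hρ0 : 0 < ρ := by positivity
  have hρβ : κ * ρ ^ β = 1 / 2 := by
    rw [hρ, Real.rpow_inv_rpow (by positivity) hβ.ne']; field_simp
  obtain ⟨Z, hZT, hZfin, hZ⟩ := hT.finite_cover_balls hρ0
  lift Z to Finset E using hZfin
  set C := (Z.card + 1) * (Real.exp (2 * L + 3) + 1) * (2 / σl) with hC
  have hE := Real.exp_pos (2 * L + 3)
  have hCσ : 2 / σl ≤ C := by
    have h1 : (1 : ℝ) ≤ (Z.card + 1) * (Real.exp (2 * L + 3) + 1) := by
      have : (0 : ℝ) ≤ Z.card := by positivity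
      nlinarith
    rw [hC]
    exact le_mul_of_one_le_left (by positivity) h1
  refine ⟨C, by positivity, fun b γ hb hγ hCγ S hST σ μ hσ => ?_⟩
  have hb0 : 0 < b := by linarith
  set w := P.real {ω | ∃ u ∈ S, b < σ u * f u ω + μ u} with hw
  set e := Real.exp (-(L * b) ^ 2 / 2) with he
  have hh : γ / (σl / 2) = 2 / σl * γ := by field_simp
  have hhb : γ / (σl / 2) ≤ 1 / b := by
    rw [le_div_iff₀ hb0, hh]
    refine le_trans ?_ hCγ
    gcongr
  have hlocal : ∀ z ∈ Z, P.real {ω | (∃ u ∈ S, u ∈ Metric.ball z ρ ∧ b - γ < σ u * f u ω + μ u) ∧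
      ∀ u ∈ S, σ u * f u ω + μ u ≤ b} ≤
        (Real.exp (2 * L + 3) + 1) * (2 / σl) * γ * (b * w + e) := by
    intro z hz
    let U : Finset T := (S.subtype (· ∈ T)).filter fun u => (u : E) ∈ Metric.ball z ρ
    have hUmem : ∀ u : T, u ∈ U ↔ (u : E) ∈ S ∧ (u : E) ∈ Metric.ball z ρ := by
      intro u; simp [U]
    have h1 := hf.real_max_mem_Ioc_le (fun u => hmeas u) ⟨z, hZT hz⟩
      (hlaw z (hZT hz)) U (fun u => σ u) (fun u => μ u) (a₀ := σl / 2) (by positivity) ?_ hL hb hγ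
      hhb
    · have h2 : P.real {ω | ∃ u ∈ U, b < σ u * f u ω + μ u} ≤ w := by
        refine measureReal_mono ?_ (measure_ne_top _ _)
        rintro ω ⟨u, hu, hlt⟩
        exact ⟨u, ((hUmem u).1 hu).1, hlt⟩
      have h3 : P.real {ω | (∃ u ∈ S, u ∈ Metric.ball z ρ ∧ b - γ < σ u * f u ω + μ u) ∧
          ∀ u ∈ S, σ u * f u ω + μ u ≤ b} ≤ P.real {ω | (∃ u ∈ U, b - γ < σ u * f u ω + μ u) ∧
          ∀ u ∈ U, σ u * f u ω + μ u ≤ b} := by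
        refine measureReal_mono ?_ (measure_ne_top _ _)
        rintro ω ⟨⟨u, hu, hub, hlt⟩, hall⟩
        exact ⟨⟨⟨u, hST hu⟩, (hUmem _).2 ⟨hu, hub⟩, hlt⟩,
          fun v hv => hall v ((hUmem v).1 hv).1⟩
      refine h3.trans (h1.trans ?_)
      rw [hh]
      have h4 : Real.exp (2 * L + 3) * b * (2 / σl * γ) *
          P.real {ω | ∃ u ∈ U, b < σ u * f u ω + μ u} ≤
          Real.exp (2 * L + 3) * b * (2 / σl * γ) * w := by gcongr
      have h5 : 0 ≤ 2 / σl * γ * (b * w + Real.exp (2 * L + 3) * e) := by positivity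
      nlinarith
    · intro u hu
      have h1 := hcov z (hZT hz) u u.2
      have h2 : κ * dist z (u : E) ^ β ≤ κ * ρ ^ β := by
        gcongr
        rw [dist_comm]
        exact (Metric.mem_ball.1 ((hUmem u).1 hu).2).le
      have h3 := hσ u u.2
      have h4 : 1 / 2 ≤ cov[f z, f u; P] := by linarith
      show σl / 2 ≤ σ u * cov[f z, f u; P]
      nlinarith
  have hcover : {ω | (∃ u ∈ S, b - γ < σ u * f u ω + μ u) ∧ ∀ u ∈ S, σ u * f u ω + μ u ≤ b} ⊆
      ⋃ z ∈ Z, {ω | (∃ u ∈ S, u ∈ Metric.ball z ρ ∧ b - γ < σ u * f u ω + μ u) ∧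
      ∀ u ∈ S, σ u * f u ω + μ u ≤ b} := by
    rintro ω ⟨⟨u, hu, hlt⟩, hall⟩
    obtain ⟨z, hz, hzu⟩ := mem_iUnion₂.1 (hZ (hST hu))
    exact mem_iUnion₂.2 ⟨z, hz, ⟨u, hu, hzu, hlt⟩, hall⟩
  calc _ ≤ _ := measureReal_mono hcover (measure_ne_top _ _)
    _ ≤ _ := measureReal_biUnion_finset_le _ _
    _ ≤ ∑ z ∈ Z, (Real.exp (2 * L + 3) + 1) * (2 / σl) * γ * (b * w + e) :=
        Finset.sum_le_sum hlocal
    _ = Z.card * ((Real.exp (2 * L + 3) + 1) * (2 / σl) * γ * (b * w + e)) := by simp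
    _ ≤ (Z.card + 1) * ((Real.exp (2 * L + 3) + 1) * (2 / σl) * γ * (b * w + e)) := by
        gcongr; linarith
    _ = _ := by rw [hC]; ring

/-- The number of lattice points in a bounded set. -/
lemma exists_card_latticePoints_le {d : ℕ} {T : Set (EuclideanSpace ℝ (Fin d))}
    (hT : Bornology.IsBounded T) :
    ∃ A > (0 : ℝ), ∀ N : ℕ, 1 ≤ N → ∃ S : Finset (EuclideanSpace ℝ (Fin d)),
      (S : Set (EuclideanSpace ℝ (Fin d))) = latticePoints d T N ∧
        (S.card : ℝ) ≤ A * (N : ℝ) ^ d := by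
  classical
  obtain ⟨R, hR0, hR⟩ := hT.exists_pos_norm_le
  refine ⟨(2 * R + 3) ^ d, by positivity, fun N hN => ?_⟩
  have hN1 : (1 : ℝ) ≤ N := by exact_mod_cast hN
  set m : ℕ := ⌈R * N⌉₊ with hm
  set F : Finset (EuclideanSpace ℝ (Fin d)) :=
    (Fintype.piFinset fun _ : Fin d => Finset.Icc (-(m : ℤ)) m).image
      fun z => WithLp.toLp 2 fun j => (z j : ℝ) / N with hF
  have hsub : latticePoints d T N ⊆ F := by
    rintro u ⟨huT, hu⟩
    choose z hz using hu
    refine Finset.mem_coe.2 (Finset.mem_image.2 ⟨z, ?_, ?_⟩)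
    · refine Fintype.mem_piFinset.2 fun j => Finset.mem_Icc.2 (abs_le.1 ?_)
      have h1 : |u j| ≤ R := (PiLp.norm_apply_le u j).trans (hR u huT)
      rw [hz j, abs_div, Nat.abs_cast, div_le_iff₀ (by linarith)] at h1
      have h2 : |(z j : ℝ)| ≤ m := h1.trans (Nat.le_ceil _)
      exact_mod_cast h2
    · ext j
      simp [hz j]
  have hfin : (latticePoints d T N).Finite := F.finite_toSet.subset hsub
  refine ⟨hfin.toFinset, by simp, ?_⟩
  have hcard : hfin.toFinset.card ≤ (2 * m + 1) ^ d := by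
    calc hfin.toFinset.card ≤ F.card := Finset.card_le_card (by simpa using hsub)
      _ ≤ _ := Finset.card_image_le
      _ = (2 * m + 1) ^ d := by
        simp only [Fintype.card_piFinset, Int.card_Icc, Finset.prod_const, Finset.card_univ,
          Fintype.card_fin]
        congr 1
        omega
  have hm' : (m : ℝ) ≤ R * N + 1 := (Nat.ceil_lt_add_one (by positivity)).le
  calc (hfin.toFinset.card : ℝ) ≤ (2 * m + 1 : ℝ) ^ d := by exact_mod_cast hcard
    _ ≤ ((2 * R + 3) * N) ^ d := by gcongr; nlinarith
    _ = _ := mul_pow _ _ _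

/-- Tail bound for an increment of a scaled and shifted standardized Gaussian process. -/
lemma ProbabilityTheory.IsGaussianProcess.real_increment_gt_le {Ω ι : Type*} {mΩ : MeasurableSpace Ω}
    {P : Measure Ω} {f : ι → Ω → ℝ} (hf : IsGaussianProcess f P)
    (hlaw : ∀ u, P.map (f u) = gaussianReal 0 1) (s t : ι) {a a' m m' η γ : ℝ} (hη : 0 < η)
    (hvar : (a - a') ^ 2 + 2 * a * a' * (1 - cov[f s, f t; P]) ≤ η ^ 2) (hm : m - m' ≤ η)
    (hγ : 2 * η ≤ γ) :
    P.real {ω | γ < (a * f s ω + m) - (a' * f t ω + m')} ≤ Real.exp (-(γ / η) ^ 2 / 8) := by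
  have := hf.isProbabilityMeasure
  have hLp : ∀ u, MemLp (f u) 2 P := fun u => (hf.hasGaussianLaw_eval u).memLp_two
  have hmean : ∀ u, ∫ ω, f u ω ∂P = 0 := fun u => by
    have h1 := integral_map (μ := P) (φ := f u) (f := fun x : ℝ => x) (hf.aemeasurable u)
      (by fun_prop)
    rw [hlaw, integral_id_gaussianReal] at h1
    exact h1.symm
  have hvar1 : ∀ u, Var[f u; P] = 1 := fun u => by
    have h1 := variance_map (μ := P) (X := id) (Y := f u) (by fun_prop) (hf.aemeasurable u)
    rw [hlaw, variance_id_gaussianReal] at h1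
    simpa using h1.symm
  set Y : Ω → ℝ := fun ω => a * f s ω - a' * f t ω with hY
  have hYg : HasGaussianLaw Y P := by
    have h1 := (hf.hasGaussianLaw_prodMk (s := s) (t := t)).map
      (a • ContinuousLinearMap.fst ℝ ℝ ℝ - a' • ContinuousLinearMap.snd ℝ ℝ ℝ)
    convert! h1 using 1
  have hYmean : P[Y] = 0 := by
    rw [hY, integral_sub (((hLp s).integrable (by norm_num)).const_mul _)
      (((hLp t).integrable (by norm_num)).const_mul _), integral_const_mul, integral_const_mul,
      hmean, hmean]
    simp
  have hYvar : Var[Y; P] = (a - a') ^ 2 + 2 * a * a' * (1 - cov[f s, f t; P]) := by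
    have : Y = (fun ω => a * f s ω) - fun ω => a' * f t ω := rfl
    rw [this, variance_sub ((hLp s).const_mul _) ((hLp t).const_mul _), variance_const_mul,
      variance_const_mul, covariance_const_mul_left, covariance_const_mul_right, hvar1, hvar1]
    ring
  have hYlaw := hYg.map_eq_gaussianReal
  rw [hYmean] at hYlaw
  set x := γ / η with hx
  have hx2 : 2 ≤ x := by rw [hx, le_div_iff₀ hη]; exact hγ
  have hγx : γ = x * η := by rw [hx]; field_simp
  set l := x / (2 * η) with hl
  have hl0 : 0 ≤ l := by positivity
  have hexpY : Integrable (fun ω => Real.exp (l * Y ω)) P := by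
    rw [← mgf_pos_iff, mgf_gaussianReal hYlaw]
    positivity
  have hsub : {ω | γ < (a * f s ω + m) - (a' * f t ω + m')} ⊆ {ω | γ - η ≤ Y ω} := by
    intro ω hω
    simp only [mem_ofPred_eq, hY] at hω ⊢
    linarith
  refine (measureReal_mono hsub).trans ((measure_ge_le_exp_mul_mgf (γ - η) hl0 hexpY).trans ?_)
  rw [mgf_gaussianReal hYlaw, ← Real.exp_add]
  apply Real.exp_le_exp.2
  rw [Real.coe_toNNReal _ (variance_nonneg _ _), hYvar]
  have h1 : ((a - a') ^ 2 + 2 * a * a' * (1 - cov[f s, f t; P])) * l ^ 2 / 2 ≤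
      η ^ 2 * l ^ 2 / 2 := by gcongr
  have h2 : l * η = x / 2 := by rw [hl]; field_simp
  have h3 : η ^ 2 * l ^ 2 / 2 = x ^ 2 / 8 := by
    rw [← mul_pow, mul_comm η, h2]; ring
  have h4 : -l * (γ - η) = -(x / 2) * (x - 1) := by
    rw [hγx, ← h2]; ring
  nlinarith

/-- Deterministic chaining along successive nets. -/
lemma exists_gt_of_chaining {E : Type*} [PseudoMetricSpace E] {T : Set E} {X : E → ℝ}
    (hX : ContinuousOn X T) {S : ℕ → Set E} (hST : ∀ k, S k ⊆ T) {π : ℕ → E → E}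
    (hπ : ∀ k, ∀ s ∈ S (k + 1), π k s ∈ S k) {δ : ℕ → ℝ} (hδ : Tendsto δ atTop (nhds 0))
    (hnet : ∀ k, ∀ u ∈ T, ∃ s ∈ S k, dist u s ≤ δ k) {g : ℕ → ℝ} {γ b : ℝ}
    (hg : ∀ k, ∑ i ∈ Finset.range k, g i ≤ γ)
    (hinc : ∀ k, ∀ s ∈ S (k + 1), X s - X (π k s) ≤ g k) (hb : ∃ u ∈ T, b < X u) :
    ∃ s ∈ S 0, b - γ < X s := by
  have hdown : ∀ k, ∀ s ∈ S k, ∃ s₀ ∈ S 0, X s ≤ X s₀ + ∑ i ∈ Finset.range k, g i := by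
    intro k
    induction k with
    | zero => exact fun s hs => ⟨s, hs, by simp⟩
    | succ k ih =>
      intro s hs
      obtain ⟨s₀, hs₀, hle⟩ := ih _ (hπ k s hs)
      refine ⟨s₀, hs₀, ?_⟩
      rw [Finset.sum_range_succ]
      linarith [hinc k s hs]
  obtain ⟨u, hu, hbu⟩ := hb
  choose v hvS hv using fun k => hnet k u hu
  have hlim : Tendsto v atTop (nhdsWithin u T) := by
    refine tendsto_nhdsWithin_iff.2 ⟨?_, .of_forall fun k => hST k (hvS k)⟩
    rw [tendsto_iff_dist_tendsto_zero]
    exact squeeze_zero (fun _ => dist_nonneg) (fun k => by rw [dist_comm]; exact hv k) hδ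
  obtain ⟨k, hk⟩ := (((hX u hu).tendsto.comp hlim).eventually (lt_mem_nhds hbu)).exists
  obtain ⟨s₀, hs₀, hle⟩ := hdown k _ (hvS k)
  exact ⟨s₀, hs₀, by linarith [hg k, show b < X (v k) from hk]⟩

/-- Chaining bound comparing the excursion probability over `T` with the one over the coarsest
net. -/
lemma real_exists_gt_le_of_chaining {Ω E : Type*} [PseudoMetricSpace E] {mΩ : MeasurableSpace Ω}
    {P : Measure Ω} [IsProbabilityMeasure P] {T : Set E} {X : E → Ω → ℝ}
    (hX : ∀ᵐ ω ∂P, ContinuousOn (fun u => X u ω) T) {S : ℕ → Finset E} (hST : ∀ k, ↑(S k) ⊆ T)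
    {π : ℕ → E → E} (hπ : ∀ k, ∀ s ∈ S (k + 1), π k s ∈ S k) {δ : ℕ → ℝ}
    (hδ : Tendsto δ atTop (nhds 0)) (hnet : ∀ k, ∀ u ∈ T, ∃ s ∈ S k, dist u s ≤ δ k)
    {g : ℕ → ℝ} {γ b : ℝ} (hg : ∀ k, ∑ i ∈ Finset.range k, g i ≤ γ) {p : ℕ → ℝ} {D : ℝ}
    (hD : 0 ≤ D) (hp : ∀ k, ∀ s ∈ S (k + 1), P.real {ω | g k < X s ω - X (π k s) ω} ≤ p k)
    (hpD : ∀ k, (S (k + 1)).card * p k ≤ D * (1 / 2) ^ k) :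
    P.real {ω | ∃ u ∈ T, b < X u ω} ≤ P.real {ω | ∃ u ∈ S 0, b < X u ω} +
      P.real {ω | (∃ u ∈ S 0, b - γ < X u ω) ∧ ∀ u ∈ S 0, X u ω ≤ b} + 2 * D := by
  set Bad : ℕ → Set Ω := fun k => ⋃ s ∈ S (k + 1), {ω | g k < X s ω - X (π k s) ω} with hBad
  have hBadk : ∀ k, P.real (Bad k) ≤ D * (1 / 2) ^ k := fun k => calc
    P.real (Bad k) ≤ ∑ s ∈ S (k + 1), P.real {ω | g k < X s ω - X (π k s) ω} :=
        measureReal_biUnion_finset_le _ _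
    _ ≤ ∑ s ∈ S (k + 1), p k := Finset.sum_le_sum (hp k)
    _ = (S (k + 1)).card * p k := by simp
    _ ≤ _ := hpD k
  have hgeom : HasSum (fun k : ℕ => D * (1 / 2 : ℝ) ^ k) (2 * D) := by
    rw [mul_comm 2 D]
    exact hasSum_geometric_two.mul_left D
  have hBadAll : P.real (⋃ k, Bad k) ≤ 2 * D := by
    refine ENNReal.toReal_le_of_le_ofReal (by positivity) ((measure_iUnion_le _).trans ?_)
    rw [← hgeom.tsum_eq, ENNReal.ofReal_tsum_of_nonneg (fun k => by positivity) hgeom.summable]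
    refine ENNReal.tsum_le_tsum fun k => ?_
    rw [← ofReal_measureReal (measure_ne_top _ _)]
    exact ENNReal.ofReal_le_ofReal (hBadk k)
  set F := {ω | (∃ u ∈ S 0, b - γ < X u ω) ∧ ∀ u ∈ S 0, X u ω ≤ b} with hF
  set G := {ω | ∃ u ∈ S 0, b < X u ω} with hG
  have hsub : {ω | ∃ u ∈ T, b < X u ω} ≤ᵐ[P] ((G ∪ F) ∪ ⋃ k, Bad k : Set Ω) := by
    filter_upwards [hX] with ω hω hex
    by_cases hbad : ω ∈ ⋃ k, Bad k
    · exact Or.inr hbad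
    refine Or.inl ?_
    by_cases hGω : ω ∈ G
    · exact Or.inl hGω
    refine Or.inr ⟨?_, fun u hu => not_lt.1 fun hlt => hGω ⟨u, hu, hlt⟩⟩
    refine exists_gt_of_chaining (S := fun k => ↑(S k)) hω hST hπ hδ hnet hg ?_ hex
    intro k s hs
    by_contra! hlt
    exact hbad (mem_iUnion.2 ⟨k, mem_iUnion₂.2 ⟨s, hs, hlt⟩⟩)
  have h1 : P.real {ω | ∃ u ∈ T, b < X u ω} ≤ P.real ((G ∪ F) ∪ ⋃ k, Bad k) :=
    ENNReal.toReal_mono (measure_ne_top _ _) (measure_mono_ae hsub)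
  have h2 := measureReal_union_le (μ := P) (G ∪ F) (⋃ k, Bad k)
  have h3 := measureReal_union_le (μ := P) G F
  linarith

/-- Stretched exponential decay dominates polynomial growth, in the form used to sum the chaining
error. -/
lemma exists_forall_pow_mul_exp_le (d : ℕ) {A c α Λ κ : ℝ} (hc : 0 < c) (hα : 0 < α) :
    ∃ b₀ : ℝ, 1 ≤ b₀ ∧ ∀ b Q : ℝ, b₀ ≤ b → b₀ ≤ Q →
      A * (2 * Q) ^ d * Real.exp (-(c * b ^ 2 * Q ^ α)) ≤ Real.exp (-Λ * b ^ 2) * Q ^ (-κ) := by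
  have h1 : Tendsto (fun Q : ℝ => A * 2 ^ d * ((Q ^ α) ^ ((d + κ) / α) *
      Real.exp (-1 * Q ^ α))) atTop (nhds 0) := by
    have := ((tendsto_rpow_mul_exp_neg_mul_atTop_nhds_zero ((d + κ) / α) 1 one_pos).comp
      (tendsto_rpow_atTop hα)).const_mul (A * 2 ^ d)
    simpa using this
  have h2 := h1.eventually (ge_mem_nhds one_pos)
  have h3 := (tendsto_rpow_atTop hα).eventually_ge_atTop (2 * Λ / c)
  obtain ⟨q, hq⟩ := eventually_atTop.1 (h2.and h3)
  refine ⟨max (max 1 q) (2 / c), le_max_of_le_left (le_max_left _ _), fun b Q hb hQ => ?_⟩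
  have hb1 : 1 ≤ b := (le_max_left _ _).trans ((le_max_left _ _).trans hb)
  have hbc : 2 / c ≤ b := (le_max_right _ _).trans hb
  have hQ0 : 0 < Q := one_pos.trans_le ((le_max_left _ _).trans ((le_max_left _ _).trans hQ))
  obtain ⟨h4, h5⟩ := hq Q ((le_max_right _ _).trans ((le_max_left _ _).trans hQ))
  set y := Q ^ α with hy
  have hy0 : 0 < y := by positivity
  have h6 : y ^ ((d + κ) / α) = Q ^ d * Q ^ κ := by
    rw [hy, ← Real.rpow_mul hQ0.le, mul_div_cancel₀ _ hα.ne', Real.rpow_add hQ0, Real.rpow_natCast]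
  rw [h6] at h4
  have h7 : Λ * b ^ 2 + y ≤ c * b ^ 2 * y := by
    rw [div_le_iff₀ hc] at hbc h5
    have h8 : 2 * y ≤ c * b ^ 2 * y := by
      gcongr
      nlinarith
    have h9 : 2 * Λ * b ^ 2 ≤ y * c * b ^ 2 := by gcongr
    linarith
  calc A * (2 * Q) ^ d * Real.exp (-(c * b ^ 2 * y))
      = (A * 2 ^ d * (Q ^ d * Q ^ κ * Real.exp (-1 * y))) *
          (Real.exp (y - c * b ^ 2 * y) * Q ^ (-κ)) := by
        rw [show -(c * b ^ 2 * y) = -1 * y + (y - c * b ^ 2 * y) by ring, Real.exp_add,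
          Real.rpow_neg hQ0.le, mul_pow]
        field_simp
    _ ≤ 1 * (Real.exp (y - c * b ^ 2 * y) * Q ^ (-κ)) := by gcongr
    _ ≤ Real.exp (-Λ * b ^ 2) * Q ^ (-κ) := by
        rw [one_mul]
        gcongr
        linarith

/-- The lower bound on the lattice resolution leaves a spare power of `N`. -/
lemma exists_mul_rpow_le_of_resolution {β ε₀ q : ℝ} (hβ : 0 < β) (hε₀ : 0 < ε₀) (hq : 0 ≤ q) :
    ∃ θ : ℝ, 0 < θ ∧ θ ≤ 1 / 2 ∧ ∀ ε b N : ℝ, 0 < ε → ε ≤ 1 → 1 ≤ b →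
      b ^ ((2 / β) * (q + 2 + ε₀)) * ε ^ (-(2 / β + ε₀)) ≤ N →
      b ^ 2 * ε⁻¹ * N ^ (θ * β / 2) ≤ N ^ (β / 2) := by
  set x := ε₀ * β / 2 with hx
  have hx0 : 0 < x := by positivity
  refine ⟨min (1 / 2) (min (x / (1 + x)) (ε₀ / (q + 2 + ε₀))), by positivity, min_le_left _ _,
    fun ε b N hε hε1 hb hN => ?_⟩
  set θ := min (1 / 2) (min (x / (1 + x)) (ε₀ / (q + 2 + ε₀))) with hθ
  have hb0 : 0 < b := by linarith
  have hθ1 : θ ≤ x / (1 + x) := (min_le_right _ _).trans (min_le_left _ _)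
  have hθ2 : θ ≤ ε₀ / (q + 2 + ε₀) := (min_le_right _ _).trans (min_le_right _ _)
  have hθ3 : θ ≤ 1 / 2 := min_le_left _ _
  rw [le_div_iff₀ (by positivity)] at hθ1 hθ2
  have hN0 : 0 < N := lt_of_lt_of_le (by positivity) hN
  have hsplit : N ^ (β / 2) = N ^ ((1 - θ) * β / 2) * N ^ (θ * β / 2) := by
    rw [← Real.rpow_add hN0]; ring_nf
  rw [hsplit]
  gcongr
  have hexp : 0 ≤ (1 - θ) * β / 2 := by
    have : 0 ≤ 1 - θ := by linarith
    positivity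
  refine le_trans ?_ (Real.rpow_le_rpow (by positivity) hN hexp)
  rw [Real.mul_rpow (by positivity) (by positivity), ← Real.rpow_mul hb0.le,
    ← Real.rpow_mul hε.le]
  have h1 : b ^ 2 ≤ b ^ (2 / β * (q + 2 + ε₀) * ((1 - θ) * β / 2)) := by
    rw [← Real.rpow_natCast]
    apply Real.rpow_le_rpow_of_exponent_le hb
    have : 2 / β * (q + 2 + ε₀) * ((1 - θ) * β / 2) = (q + 2 + ε₀) - θ * (q + 2 + ε₀) := by
      field_simp
    rw [this]
    push_cast
    linarith
  have h2 : ε⁻¹ ≤ ε ^ (-(2 / β + ε₀) * ((1 - θ) * β / 2)) := by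
    rw [← Real.rpow_neg_one]
    apply Real.rpow_le_rpow_of_exponent_ge hε hε1
    have : -(2 / β + ε₀) * ((1 - θ) * β / 2) = -((1 + x) - θ * (1 + x)) := by
      rw [hx]; field_simp
    rw [this]
    linarith
  gcongr

/-- Choice of chaining thresholds `g`: at every dyadic level `Q = 2 ^ k * N` they dominate the
increment scale `C₀ * (κ / Q) ^ (β / 2)` by enough to make the union bound summable. -/
lemma exists_chaining_thresholds (d : ℕ) {β ε₀ q c₁ C₀ κ : ℝ} (A Λ : ℝ) (hβ : 0 < β)
    (hε₀ : 0 < ε₀) (hq : 0 ≤ q) (hc₁ : 0 < c₁) (hC₀ : 0 < C₀) (hκ : 0 < κ) (hA : 0 < A) :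
    ∃ b₀ : ℝ, 1 ≤ b₀ ∧ ∀ ε b N : ℝ, 0 < ε → ε ≤ 1 → b₀ ≤ b →
      b ^ ((2 / β) * (q + 2 + ε₀)) * ε ^ (-(2 / β + ε₀)) ≤ N →
      κ ≤ N ∧ 1 ≤ N ∧ ∃ g : ℕ → ℝ, (∀ k, ∑ i ∈ Finset.range k, g i ≤ c₁ * ε / b) ∧
        ∀ k, 2 * (C₀ * (κ / (2 ^ k * N)) ^ (β / 2)) ≤ g k ∧
          A * (2 * (2 ^ k * N)) ^ d *
              Real.exp (-(g k / (C₀ * (κ / (2 ^ k * N)) ^ (β / 2))) ^ 2 / 8) ≤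
            ε * Real.exp (-Λ * b ^ 2) * (1 / 2) ^ k := by
  obtain ⟨θ, hθ0, hθ1, hθ⟩ := exists_mul_rpow_le_of_resolution hβ hε₀ hq
  set ρ : ℝ := 2 ^ (-(β / 4)) with hρ
  have hρ0 : 0 < ρ := by positivity
  have hρ1 : ρ < 1 := Real.rpow_lt_one_of_one_lt_of_neg one_lt_two (by linarith)
  have hρ1' : 0 < 1 - ρ := by linarith
  set c₂ := c₁ * (1 - ρ) / (C₀ * κ ^ (β / 2)) with hc₂
  have hc₂0 : 0 < c₂ := by positivity
  obtain ⟨b₁, hb₁, hexp⟩ := exists_forall_pow_mul_exp_le d (A := A) (c := c₂ ^ 2 / 8)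
    (α := θ * β) (Λ := Λ) (κ := 1 + β / 2) (by positivity) (by positivity)
  set m := max b₁ κ with hm
  have hm0 : 0 < m := lt_max_of_lt_right hκ
  refine ⟨max (max b₁ (m ^ (β / 2))) (2 / c₂),
    hb₁.trans ((le_max_left _ _).trans (le_max_left _ _)), fun ε b N hε hε1 hb hN => ?_⟩
  have hbb₁ : b₁ ≤ b := (le_max_left _ _).trans ((le_max_left _ _).trans hb)
  have hbm : m ^ (β / 2) ≤ b := (le_max_right _ _).trans ((le_max_left _ _).trans hb)
  have hbc : 2 / c₂ ≤ b := (le_max_right _ _).trans hb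
  have hb1 : 1 ≤ b := hb₁.trans hbb₁
  have hb0 : 0 < b := by linarith
  have hN1 : 1 ≤ N := by
    refine le_trans ?_ hN
    have h1 : 1 ≤ b ^ ((2 / β) * (q + 2 + ε₀)) := Real.one_le_rpow hb1 (by positivity)
    have h2 : 1 ≤ ε ^ (-(2 / β + ε₀)) :=
      Real.one_le_rpow_of_pos_of_le_one_of_nonpos hε hε1 (by
        have : 0 < 2 / β + ε₀ := by positivity
        linarith)
    nlinarith
  have hN0 : 0 < N := by linarith
  have hres := hθ ε b N hε hε1 hb1 hN
  have hNθ : 1 ≤ N ^ (θ * β / 2) := Real.one_le_rpow hN1 (by positivity)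
  have hεinv : 1 ≤ ε⁻¹ := (one_le_inv₀ hε).2 hε1
  have hNβ : b ^ 2 * ε⁻¹ ≤ N ^ (β / 2) :=
    (le_mul_of_one_le_right (by positivity) hNθ).trans hres
  have hmN : m ≤ N := by
    rw [← Real.rpow_le_rpow_iff hm0.le hN0.le (half_pos hβ)]
    nlinarith
  have hNε : N ^ (-(β / 2)) ≤ ε := by
    rw [Real.rpow_neg hN0.le]
    refine inv_le_of_inv_le₀ hε (le_trans ?_ hNβ)
    exact le_mul_of_one_le_left (by positivity) (one_le_pow₀ hb1)
  refine ⟨(le_max_right _ _).trans hmN, hN1, fun k => c₁ * ε / b * ((1 - ρ) * ρ ^ k), ?_, ?_⟩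
  · intro k
    rw [← Finset.mul_sum, ← Finset.mul_sum]
    refine mul_le_of_le_one_right (by positivity) ?_
    rw [mul_neg_geom_sum]
    linarith [pow_pos hρ0 k]
  intro k
  set Q : ℝ := 2 ^ k * N with hQ
  have h2k : (1 : ℝ) ≤ 2 ^ k := one_le_pow₀ one_le_two
  have hNQ : N ≤ Q := le_mul_of_one_le_left hN0.le h2k
  have hQ1 : 1 ≤ Q := hN1.trans hNQ
  have hQ0 : 0 < Q := by linarith
  set η := C₀ * (κ / Q) ^ (β / 2) with hη
  have hη0 : 0 < η := by positivity
  set g := c₁ * ε / b * ((1 - ρ) * ρ ^ k) with hg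
  have hQθ : Q ^ (θ * β / 2) * b ^ 2 ≤ ρ ^ k * ε * Q ^ (β / 2) := by
    have h1 : ((2 : ℝ) ^ k) ^ (θ * β / 2) ≤ ρ ^ k * ((2 : ℝ) ^ k) ^ (β / 2) := by
      have : ρ ^ k = ((2 : ℝ) ^ k) ^ (-(β / 4)) := by
        rw [hρ, ← Real.rpow_natCast, ← Real.rpow_natCast, ← Real.rpow_mul two_pos.le,
          ← Real.rpow_mul two_pos.le, mul_comm]
      rw [this, ← Real.rpow_add (by positivity)]
      apply Real.rpow_le_rpow_of_exponent_le h2k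
      nlinarith
    have h2 : b ^ 2 * N ^ (θ * β / 2) ≤ ε * N ^ (β / 2) := by
      have := mul_le_mul_of_nonneg_left hres hε.le
      calc b ^ 2 * N ^ (θ * β / 2) = ε * (b ^ 2 * ε⁻¹ * N ^ (θ * β / 2)) := by field_simp
        _ ≤ _ := this
    rw [hQ, Real.mul_rpow (by positivity) hN0.le, Real.mul_rpow (by positivity) hN0.le]
    calc _ = ((2 : ℝ) ^ k) ^ (θ * β / 2) * (b ^ 2 * N ^ (θ * β / 2)) := by ring
      _ ≤ (ρ ^ k * ((2 : ℝ) ^ k) ^ (β / 2)) * (ε * N ^ (β / 2)) := by gcongr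
      _ = _ := by ring
  have hratio : c₂ * b * Q ^ (θ * β / 2) ≤ g / η := by
    rw [le_div_iff₀ hη0, hη, hg, hc₂, Real.div_rpow hκ.le hQ0.le]
    have hQβ : 0 < Q ^ (β / 2) := by positivity
    have hκβ : 0 < κ ^ (β / 2) := by positivity
    rw [show c₁ * (1 - ρ) / (C₀ * κ ^ (β / 2)) * b * Q ^ (θ * β / 2) *
        (C₀ * (κ ^ (β / 2) / Q ^ (β / 2))) =
        c₁ * (1 - ρ) / (b * Q ^ (β / 2)) * (Q ^ (θ * β / 2) * b ^ 2) by field_simp,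
      show c₁ * ε / b * ((1 - ρ) * ρ ^ k) =
        c₁ * (1 - ρ) / (b * Q ^ (β / 2)) * (ρ ^ k * ε * Q ^ (β / 2)) by field_simp]
    gcongr
  have hQθ1 : 1 ≤ Q ^ (θ * β / 2) := Real.one_le_rpow hQ1 (by positivity)
  have hc₂b : 2 ≤ c₂ * b := by rwa [div_le_iff₀' hc₂0] at hbc
  refine ⟨?_, ?_⟩
  · rw [← le_div_iff₀ hη0]
    nlinarith
  have hsq : (c₂ ^ 2 / 8) * b ^ 2 * Q ^ (θ * β) ≤ (g / η) ^ 2 / 8 := by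
    have h1 : (Q ^ (θ * β / 2)) ^ 2 = Q ^ (θ * β) := by
      rw [← Real.rpow_mul_natCast hQ0.le]
      congr 1
      push_cast
      ring
    have h2 : (c₂ * b * Q ^ (θ * β / 2)) ^ 2 ≤ (g / η) ^ 2 := by gcongr
    rw [mul_pow, h1] at h2
    linarith
  calc A * (2 * Q) ^ d * Real.exp (-(g / η) ^ 2 / 8)
      ≤ A * (2 * Q) ^ d * Real.exp (-((c₂ ^ 2 / 8) * b ^ 2 * Q ^ (θ * β))) := by
        gcongr
        linarith
    _ ≤ Real.exp (-Λ * b ^ 2) * Q ^ (-(1 + β / 2)) :=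
        hexp b Q hbb₁ ((le_max_left _ _).trans (hmN.trans hNQ))
    _ ≤ Real.exp (-Λ * b ^ 2) * ((1 / 2) ^ k * ε) := by
        gcongr
        rw [neg_add, Real.rpow_add hQ0, Real.rpow_neg_one]
        have h1 : Q⁻¹ ≤ (1 / 2) ^ k := by
          rw [one_div, inv_pow]
          gcongr
          exact le_mul_of_one_le_right (by positivity) hN1
        have h2 : Q ^ (-(β / 2)) ≤ ε :=
          (Real.rpow_le_rpow_of_nonpos hN0 hNQ (by linarith)).trans hNε
        gcongr
    _ = _ := by ring

/-- A field all of whose finite linear combinations over `T` are centred Gaussian is a Gaussian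
process on `T`. -/
lemma isGaussianProcess_of_sum_map_eq_gaussianReal {Ω E : Type*} {mΩ : MeasurableSpace Ω}
    {P : Measure Ω} {T : Set E} {f : E → Ω → ℝ} (hmeas : ∀ u, Measurable (f u))
    (hf : ∀ s : Finset E, ↑s ⊆ T → ∀ c : E → ℝ, ∃ v : NNReal,
      P.map (fun ω => ∑ u ∈ s, c u * f u ω) = gaussianReal 0 v) :
    IsGaussianProcess (fun u : T => f u) P := by
  classical
  refine ⟨fun I => ⟨?_⟩⟩
  have hm : Measurable fun ω => I.restrict fun u : T => f u ω :=
    measurable_pi_iff.2 fun i => hmeas _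
  refine isGaussian_of_map_eq_gaussianReal fun L => ?_
  set c : E → ℝ := fun u =>
    if h : u ∈ T then if h' : (⟨u, h⟩ : T) ∈ I then L (Pi.single ⟨_, h'⟩ 1) else 0 else 0 with hc
  obtain ⟨v, hv⟩ := hf (I.map (Function.Embedding.subtype _)) (by
    intro u hu
    obtain ⟨w, -, rfl⟩ := Finset.mem_map.1 (Finset.mem_coe.1 hu)
    exact w.2) c
  refine ⟨0, v, ?_⟩
  rw [Measure.map_map (by fun_prop) hm, ← hv]
  congr 1
  ext ω
  rw [Finset.sum_map, ← Finset.sum_coe_sort I]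
  have h1 : L (I.restrict fun u : T => f u ω) =
      ∑ i : I, f i.1 ω * L (Pi.single i 1) := by
    conv_lhs => rw [← Finset.univ_sum_single (I.restrict fun u : T => f u ω), map_sum]
    refine Finset.sum_congr rfl fun i _ => ?_
    have : Pi.single i (I.restrict (fun u : T => f u ω) i) =
        (f i.1 ω) • (Pi.single i 1 : I → ℝ) := by
      rw [← Pi.single_smul]; simp
    rw [this, map_smul, smul_eq_mul]
  rw [Function.comp_apply, h1]
  refine Finset.sum_congr rfl fun i _ => ?_
  simp [hc, mul_comm]

lemma covariance_eq_integral_mul_of_map_eq {Ω : Type*} {mΩ : MeasurableSpace Ω} {P : Measure Ω}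
    {X Y : Ω → ℝ} {v w : NNReal} (hX : Measurable X) (hY : Measurable Y)
    (hXlaw : P.map X = gaussianReal 0 v) (hYlaw : P.map Y = gaussianReal 0 w) :
    cov[X, Y; P] = ∫ ω, X ω * Y ω ∂P := by
  have key : ∀ {Z : Ω → ℝ} {u : NNReal}, Measurable Z → P.map Z = gaussianReal 0 u →
      ∫ ω, Z ω ∂P = 0 := fun {Z u} hZ hZlaw => by
    have h1 := integral_map (μ := P) (φ := Z) (f := fun x : ℝ => x) hZ.aemeasurable (by fun_prop)
    rw [hZlaw, integral_id_gaussianReal] at h1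
    exact h1.symm
  simp [covariance, key hX hXlaw, key hY hYlaw]

lemma integral_mul_self_of_map_eq_gaussianReal {Ω : Type*} {mΩ : MeasurableSpace Ω}
    {P : Measure Ω} {X : Ω → ℝ} (hX : Measurable X) (hXlaw : P.map X = gaussianReal 0 1) :
    ∫ ω, X ω * X ω ∂P = 1 := by
  rw [← covariance_eq_integral_mul_of_map_eq hX hX hXlaw hXlaw, covariance_self hX.aemeasurable]
  have h1 := variance_map (μ := P) (X := id) (Y := X) (by fun_prop) hX.aemeasurable
  rw [hXlaw, variance_id_gaussianReal] at h1
  simpa using h1.symm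

/-- A single site gives a Gaussian lower bound for the excursion probability. -/
lemma exp_le_real_exists_gt {Ω E : Type*} {mΩ : MeasurableSpace Ω} {P : Measure Ω}
    [IsProbabilityMeasure P] {T : Set E} {f : E → Ω → ℝ} (hmeas : ∀ u, Measurable (f u))
    (hlaw : ∀ u ∈ T, P.map (f u) = gaussianReal 0 1) (hT : T.Nonempty) {σl μl b : ℝ}
    (hσl : 0 < σl) (hb : 1 ≤ b) {σ μ : E → ℝ} (hσ : ∀ u ∈ T, σl ≤ σ u)
    (hμ : ∀ u ∈ T, μl ≤ μ u) :
    Real.exp (-(((1 + |μl|) / σl + 1) ^ 2 / 2 + 1) * b ^ 2) ≤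
      P.real {ω | ∃ u ∈ T, b < σ u * f u ω + μ u} := by
  obtain ⟨t, ht⟩ := hT
  set x := (b + |μl|) / σl with hx
  have hx0 : 0 ≤ x := by positivity
  calc _ ≤ Real.exp (-(x + 1) ^ 2 / 2 - 1) := by
        have h1 : x + 1 ≤ ((1 + |μl|) / σl + 1) * b := by
          rw [add_mul, one_mul, div_mul_eq_mul_div, hx]
          gcongr
          nlinarith [abs_nonneg μl]
        have h2 : (x + 1) ^ 2 ≤ (((1 + |μl|) / σl + 1) * b) ^ 2 := by gcongr
        rw [mul_pow] at h2
        gcongr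
        nlinarith
    _ ≤ (gaussianReal 0 1).real (Ioi x) := exp_le_gaussianReal_real_Ioi hx0
    _ = P.real (f t ⁻¹' Ioi x) := by
        rw [← hlaw t ht, map_measureReal_apply (hmeas t) measurableSet_Ioi]
    _ ≤ _ := by
        refine measureReal_mono (fun ω hω => ⟨t, ht, ?_⟩) (measure_ne_top _ _)
        have h1 : x < f t ω := hω
        have h2 : b + |μl| < f t ω * σl := by rwa [hx, div_lt_iff₀ hσl] at h1
        have h3 : f t ω * σl ≤ σ t * f t ω := by
          rw [mul_comm]
          have := hx0.trans h1.le
          gcongr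
          exact hσ t ht
        linarith [hμ t ht, neg_abs_le μl]

lemma continuousOn_of_abs_sub_le {E : Type*} [PseudoMetricSpace E] {T : Set E} {h : E → ℝ}
    {κ β : ℝ} (hβ : 0 < β) (hh : ∀ s ∈ T, ∀ u ∈ T, |h u - h s| ≤ κ * dist s u ^ β) :
    ContinuousOn h T := by
  intro s hs
  rw [ContinuousWithinAt, tendsto_iff_dist_tendsto_zero]
  have hlim : Tendsto (fun u => κ * dist s u ^ β) (nhdsWithin s T) (nhds 0) := by
    have h1 : Continuous fun u => κ * dist s u ^ β :=
      continuous_const.mul ((continuous_const.dist continuous_id).rpow_const fun _ => .inr hβ.le)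
    have h2 := h1.tendsto s
    simp only [dist_self, Real.zero_rpow hβ.ne', mul_zero] at h2
    exact h2.mono_left nhdsWithin_le_nhds
  refine squeeze_zero' (.of_forall fun _ => dist_nonneg) ?_ hlim
  filter_upwards [self_mem_nhdsWithin] with u hu
  exact hh s hs u hu

/-- Increment tail bound for `σ u * f u + μ u` in terms of an upper bound `δ` on the distance. -/
lemma ProbabilityTheory.IsGaussianProcess.real_affine_increment_gt_le {Ω E : Type*}
    [PseudoMetricSpace E] {mΩ : MeasurableSpace Ω} {P : Measure Ω} {T : Set E} {f : E → Ω → ℝ}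
    (hproc : IsGaussianProcess (fun u : T => f u) P)
    (hstd : ∀ u ∈ T, P.map (f u) = gaussianReal 0 1) {σl σu β κH β' κH' C₀ δ γ : ℝ}
    (hσl : 0 < σl) (hσ : σl ≤ σu) (hβ : 0 < β) (hκH : 0 < κH) (hβ' : 0 < β') (hκH' : 0 < κH')
    (hcov : ∀ s ∈ T, ∀ u ∈ T, 1 - cov[f s, f u; P] ≤ κH' * dist s u ^ β')
    (hκC₀ : κH ≤ C₀) (hC₀sq : κH ^ 2 + 2 * σu ^ 2 * κH' ≤ C₀ ^ 2) {σ μ : E → ℝ}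
    (hσm : ∀ u ∈ T, σ u ∈ Icc σl σu)
    (hhol : ∀ s ∈ T, ∀ u ∈ T, |σ u - σ s| + |μ u - μ s| ≤ κH * dist s u ^ β)
    {s t : E} (hsT : s ∈ T) (htT : t ∈ T) (hδ0 : 0 < δ) (hδ1 : δ ≤ 1) (hdist : dist s t ≤ δ)
    (hγ : 2 * (C₀ * δ ^ (min β β' / 2)) ≤ γ) :
    P.real {ω | γ < (σ s * f s ω + μ s) - (σ t * f t ω + μ t)} ≤
      Real.exp (-(γ / (C₀ * δ ^ (min β β' / 2))) ^ 2 / 8) := by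
  set βs := min β β' with hβs
  have hβs0 : 0 < βs := lt_min hβ hβ'
  have hσu : 0 < σu := hσl.trans_le hσ
  have hC₀0 : 0 < C₀ := hκH.trans_le hκC₀
  have hpowle : ∀ a c : ℝ, 0 ≤ a → c ≤ a → dist s t ^ a ≤ δ ^ c := fun a c ha hca =>
    (Real.rpow_le_rpow dist_nonneg hdist ha).trans
      (Real.rpow_le_rpow_of_exponent_ge hδ0 hδ1 hca)
  have hsq : (δ ^ (βs / 2)) ^ 2 = δ ^ βs := by
    rw [← Real.rpow_mul_natCast hδ0.le]
    congr 1
    push_cast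
    ring
  have hhs := hhol s hsT t htT
  have hδβ : κH * dist s t ^ β ≤ κH * δ ^ (βs / 2) := by
    gcongr
    exact hpowle _ _ hβ.le ((half_le_self hβs0.le).trans (min_le_left _ _))
  have hσd : |σ s - σ t| ≤ κH * δ ^ (βs / 2) := by
    rw [abs_sub_comm]
    linarith [abs_nonneg (μ t - μ s)]
  have hμd : μ s - μ t ≤ κH * δ ^ (βs / 2) := by
    have := neg_abs_le (μ t - μ s)
    linarith [abs_nonneg (σ t - σ s)]
  refine hproc.real_increment_gt_le (fun u => hstd u u.2) ⟨s, hsT⟩ ⟨t, htT⟩ (by positivity) ?_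
    (hμd.trans (by gcongr)) hγ
  have h1 : (σ s - σ t) ^ 2 ≤ κH ^ 2 * δ ^ βs := by
    rw [← hsq, ← mul_pow, ← sq_abs]
    gcongr
  have h2 : 2 * σ s * σ t * (1 - cov[f s, f t; P]) ≤ 2 * σu ^ 2 * κH' * δ ^ βs := by
    have hs0 : 0 < σ s := hσl.trans_le (hσm s hsT).1
    have ht0 : 0 < σ t := hσl.trans_le (hσm t htT).1
    calc _ ≤ 2 * σ s * σ t * (κH' * δ ^ βs) := by
          gcongr
          refine (hcov s hsT t htT).trans ?_
          gcongr
          exact hpowle _ _ hβ'.le (min_le_right _ _)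
      _ ≤ 2 * σu * σu * (κH' * δ ^ βs) := by
          gcongr
          · exact (hσm s hsT).2
          · exact (hσm t htT).2
      _ = _ := by ring
  rw [mul_pow, hsq]
  calc _ ≤ κH ^ 2 * δ ^ βs + 2 * σu ^ 2 * κH' * δ ^ βs := add_le_add h1 h2
    _ = (κH ^ 2 + 2 * σu ^ 2 * κH') * δ ^ βs := by ring
    _ ≤ _ := by gcongr

/-- Arithmetic combining the chaining bound, the boundary-layer bound and the lower bound on the
excursion probability `w`. -/
lemma sub_lt_mul_of_chaining {w wN F C γ b ε Λ : ℝ} (hC0 : 0 < C) (hγ0 : 0 ≤ γ) (hb3 : 3 ≤ b)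
    (hε : 0 < ε) (hΛ1 : 1 ≤ Λ) (hCγb : C * γ * b = ε / 8)
    (hwlow : Real.exp (-Λ * b ^ 2) ≤ w) (hwNw : wN ≤ w)
    (hmid : F ≤ C * γ * (b * wN + Real.exp (-(2 * Λ * b) ^ 2 / 2)))
    (hchain : w ≤ wN + F + 2 * (ε * Real.exp (-(Λ + 1) * b ^ 2))) : w - wN < ε * w := by
  have hw0 : 0 < w := (Real.exp_pos _).trans_le hwlow
  have hLle : Real.exp (-(2 * Λ * b) ^ 2 / 2) ≤ w := by
    refine le_trans ?_ hwlow
    gcongr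
    nlinarith [mul_nonneg (sub_nonneg.2 hΛ1) (sq_nonneg b)]
  have hmid' : C * γ * (b * wN + Real.exp (-(2 * Λ * b) ^ 2 / 2)) ≤ ε / 4 * w := by
    have hCγ : 0 ≤ C * γ := by positivity
    calc _ ≤ C * γ * (b * w + b * w) := by
          gcongr
          nlinarith
      _ = 2 * (C * γ * b) * w := by ring
      _ = _ := by rw [hCγb]; ring
  have htail : 2 * (ε * Real.exp (-(Λ + 1) * b ^ 2)) ≤ ε / 4 * w := by
    have h1 : Real.exp (-(b ^ 2)) ≤ 1 / 8 := by
      rw [Real.exp_neg, one_div]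
      gcongr
      nlinarith [Real.add_one_le_exp (b ^ 2)]
    have h2 : Real.exp (-(Λ + 1) * b ^ 2) ≤ w * (1 / 8) := by
      rw [show -(Λ + 1) * b ^ 2 = -Λ * b ^ 2 + -(b ^ 2) by ring, Real.exp_add]
      gcongr
    nlinarith [hε]
  have hεw : 0 < ε * w := mul_pos hε hw0
  linarith

/-- **Uniform control of the discretization bias (Theorem 1).**  Under C1–C4, with
`β* = min(β, β')` and `N₀(ε,b) = b^{(2/β*)(3d/β* + 2 + ε₀)} ε^{−(2/β* + ε₀)}`:
for any `ε₀ > 0` there is `b₀` such that for every `ε ∈ (0,1)`, `b > b₀` and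
`N ≥ N₀(ε,b)`, `|w_{σ,μ,N}(b) − w_{σ,μ}(b)| / w_{σ,μ}(b) < ε`, uniformly over the
Hölder class `C(μ_l, μ_u, σ_l, σ_u, β, κ_H)`. -/
theorem discretization_bias_bound
    {Ω : Type*} [MeasurableSpace Ω] (P : Measure Ω) [IsProbabilityMeasure P]
    {d : ℕ} (T : Set (EuclideanSpace ℝ (Fin d)))
    (hT : IsCompact T) (hTne : T.Nonempty)
    (f : EuclideanSpace ℝ (Fin d) → Ω → ℝ)
    (hmeas : ∀ u, Measurable (f u))
    (hGauss : ∀ s : Finset (EuclideanSpace ℝ (Fin d)), ↑s ⊆ T →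
      ∀ c : EuclideanSpace ℝ (Fin d) → ℝ, ∃ v : NNReal,
        Measure.map (fun ω => ∑ u ∈ s, c u * f u ω) P = gaussianReal 0 v)
    (hstd : ∀ u ∈ T, Measure.map (f u) P = gaussianReal 0 1)
    -- C3: almost sure continuity of the sample paths
    (hcont : ∀ᵐ ω ∂P, ContinuousOn (fun u => f u ω) T)
    (μl μu σl σu β κH β' κH' κm : ℝ)
    (hμ : μl ≤ μu) (hσl : 0 < σl) (hσ : σl ≤ σu) (hβ : 0 < β) (hκH : 0 < κH)
    (hβ' : 0 < β') (hκH' : 0 < κH') (hκm : 0 < κm)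
    -- C4: Hölder continuity of the correlation function r(s,t) = E[f(s)f(t)]
    (hC4 : ∀ s ∈ T, ∀ u ∈ T, ∀ s' ∈ T, ∀ u' ∈ T,
      |(∫ ω, f u ω * f s ω ∂P) - (∫ ω, f u' ω * f s' ω ∂P)| ≤
        κH' * (dist u u' ^ β' + dist s s' ^ β'))
    -- C2: the lattice T_N is a (κ_m/N)-net of T
    (hC2 : ∀ N : ℕ, 1 ≤ N → ∀ u ∈ T, ∃ u' ∈ latticePoints d T N, dist u u' ≤ κm / N) :
    ∀ ε0 > (0 : ℝ), ∃ b0 : ℝ, ∀ ε ∈ Set.Ioo (0 : ℝ) 1, ∀ b > b0, ∀ N : ℕ,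
      (N : ℝ) ≥ b ^ ((2 / min β β') * (3 * (d : ℝ) / min β β' + 2 + ε0)) *
        ε ^ (-(2 / min β β' + ε0)) →
      ∀ σ μ : EuclideanSpace ℝ (Fin d) → ℝ,
        (∀ u ∈ T, σ u ∈ Set.Icc σl σu) → (∀ u ∈ T, μ u ∈ Set.Icc μl μu) →
        (∀ s ∈ T, ∀ u ∈ T, |σ u - σ s| + |μ u - μ s| ≤ κH * dist s u ^ β) →
        |(P {ω | ∃ u ∈ latticePoints d T N, σ u * f u ω + μ u > b}).toReal -
            (P {ω | ∃ u ∈ T, σ u * f u ω + μ u > b}).toReal| /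
          (P {ω | ∃ u ∈ T, σ u * f u ω + μ u > b}).toReal < ε := by
  classical
  intro ε0 hε0
  set βs := min β β' with hβs
  have hβs0 : 0 < βs := lt_min hβ hβ'
  have hσu : 0 < σu := hσl.trans_le hσ
  have hproc := isGaussianProcess_of_sum_map_eq_gaussianReal hmeas hGauss
  have hcov : ∀ s ∈ T, ∀ u ∈ T, 1 - cov[f s, f u; P] ≤ κH' * dist s u ^ β' := by
    intro s hs u hu
    have h1 := hC4 s hs s hs u hu s hs
    rw [integral_mul_self_of_map_eq_gaussianReal (hmeas s) (hstd s hs), dist_self,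
      Real.zero_rpow hβ'.ne', zero_add, ← covariance_eq_integral_mul_of_map_eq (hmeas s) (hmeas u)
      (hstd s hs) (hstd u hu)] at h1
    exact (le_abs_self _).trans h1
  set Λ := ((1 + |μl|) / σl + 1) ^ 2 / 2 + 1 with hΛ
  have hΛ1 : 1 ≤ Λ := by
    rw [hΛ]
    linarith [sq_nonneg ((1 + |μl|) / σl + 1)]
  obtain ⟨C, hC0, hC⟩ := hproc.exists_real_max_mem_Ioc_le hmeas hstd hT hκH' hβ' hσl
    (L := 2 * Λ) (by positivity) hcov
  obtain ⟨A, hA0, hA⟩ := exists_card_latticePoints_le hT.isBounded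
  set C₀ := κH + 1 + 2 * σu ^ 2 * κH' with hC₀
  have hC₀0 : 0 < C₀ := by positivity
  have hκC₀ : κH ≤ C₀ := by
    have : 0 < 2 * σu ^ 2 * κH' := by positivity
    linarith
  have hC₀sq : κH ^ 2 + 2 * σu ^ 2 * κH' ≤ C₀ ^ 2 := by
    have : 0 < 2 * σu ^ 2 * κH' := by positivity
    rw [hC₀]
    nlinarith
  obtain ⟨b₁, hb₁, hthr⟩ := exists_chaining_thresholds d (q := 3 * (d : ℝ) / βs)
    (c₁ := 1 / (8 * C)) A (Λ + 1) hβs0 hε0 (by positivity) (by positivity) hC₀0 hκm hA0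
  refine ⟨max b₁ 3, fun ε hε b hb N hN σ μ hσm hμm hhol => ?_⟩
  have hbb₁ : b₁ ≤ b := ((le_max_left _ _).trans_lt hb).le
  have hb3 : 3 ≤ b := ((le_max_right _ _).trans_lt hb).le
  have hb0 : 0 < b := by linarith
  obtain ⟨hκN, hN1, g, hg, hgk⟩ := hthr ε b N hε.1 hε.2.le hbb₁ hN
  have hN1' : 1 ≤ N := by exact_mod_cast hN1
  have hN0 : (0 : ℝ) < N := by linarith
  have hpow : ∀ k : ℕ, 1 ≤ 2 ^ k * N := fun k => Nat.one_le_iff_ne_zero.2 (by positivity)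
  choose S hSeq hScard using fun k : ℕ => hA (2 ^ k * N) (hpow k)
  have hST : ∀ k, ↑(S k) ⊆ T := fun k => by
    rw [hSeq]
    exact fun u hu => hu.1
  have hnet : ∀ k, ∀ u ∈ T, ∃ s ∈ S k, dist u s ≤ κm / (2 ^ k * N) := fun k u hu => by
    obtain ⟨s, hs, hd⟩ := hC2 _ (hpow k) u hu
    refine ⟨s, ?_, by exact_mod_cast hd⟩
    rw [← Finset.mem_coe, hSeq]
    exact hs
  choose! π hπS hπd using hnet
  set γ := 1 / (8 * C) * ε / b with hγ
  have hγ0 : 0 ≤ γ := by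
    have := hε.1
    positivity
  have hCγb : C * γ * b = ε / 8 := by
    rw [hγ]
    field_simp
  set X : EuclideanSpace ℝ (Fin d) → Ω → ℝ := fun u ω => σ u * f u ω + μ u with hX
  have hXcont : ∀ᵐ ω ∂P, ContinuousOn (fun u => X u ω) T := by
    have h1 : ContinuousOn σ T := continuousOn_of_abs_sub_le hβ fun s hs u hu =>
      (le_add_of_nonneg_right (abs_nonneg _)).trans (hhol s hs u hu)
    have h2 : ContinuousOn μ T := continuousOn_of_abs_sub_le hβ fun s hs u hu =>
      (le_add_of_nonneg_left (abs_nonneg _)).trans (hhol s hs u hu)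
    filter_upwards [hcont] with ω hω
    exact (h1.mul hω).add h2
  have hδ : Tendsto (fun k : ℕ => κm / (2 ^ k * (N : ℝ))) atTop (nhds 0) :=
    ((tendsto_pow_atTop_atTop_of_one_lt one_lt_two).atTop_mul_const hN0).const_div_atTop κm
  set w := P.real {ω | ∃ u ∈ T, b < X u ω} with hw
  set wN := P.real {ω | ∃ u ∈ S 0, b < X u ω} with hwN
  have hwlow : Real.exp (-Λ * b ^ 2) ≤ w :=
    exp_le_real_exists_gt hmeas hstd hTne hσl (by linarith) (fun u hu => (hσm u hu).1)
      fun u hu => (hμm u hu).1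
  have hw0 : 0 < w := (Real.exp_pos _).trans_le hwlow
  have hwNw : wN ≤ w := measureReal_mono
    (fun ω ⟨u, hu, h⟩ => ⟨u, hST 0 hu, h⟩) (measure_ne_top _ _)
  have hinc : ∀ k, ∀ s ∈ S (k + 1), P.real {ω | g k < X s ω - X (π k s) ω} ≤
      Real.exp (-(g k / (C₀ * (κm / (2 ^ k * N)) ^ (βs / 2))) ^ 2 / 8) := by
    intro k s hs
    have hsT := hST _ hs
    refine hproc.real_affine_increment_gt_le hstd hσl hσ hβ hκH hβ' hκH' hcov hκC₀ hC₀sq hσm hhol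
      hsT (hST _ (hπS k s hsT)) (by positivity) ?_ (hπd k s hsT) (hgk k).1
    rw [div_le_one (by positivity)]
    exact hκN.trans (le_mul_of_one_le_left hN0.le (one_le_pow₀ one_le_two))
  have hchain := real_exists_gt_le_of_chaining (b := b) hXcont hST
    (fun k s hs => hπS k s (hST _ hs)) hδ (fun k u hu => ⟨π k u, hπS k u hu, hπd k u hu⟩) hg
    (D := ε * Real.exp (-(Λ + 1) * b ^ 2)) (mul_nonneg hε.1.le (Real.exp_pos _).le) hinc
    fun k => by
      refine le_trans ?_ (hgk k).2
      gcongr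
      refine (hScard (k + 1)).trans_eq ?_
      push_cast
      ring
  have hmid := hC b γ (by linarith) hγ0 (by rw [hCγb]; linarith [hε.2]) (S 0) (hST 0) σ μ
    fun u hu => (hσm u hu).1
  have hlat : {ω | ∃ u ∈ latticePoints d T N, σ u * f u ω + μ u > b} =
      {ω | ∃ u ∈ S 0, b < X u ω} := by
    have h1 := hSeq 0
    rw [pow_zero, one_mul] at h1
    ext ω
    simp only [← h1, Finset.mem_coe, mem_ofPred_eq, gt_iff_lt, hX]
  rw [hlat]
  change |wN - w| / w < ε
  rw [div_lt_iff₀ hw0, abs_sub_comm, abs_of_nonneg (sub_nonneg.2 hwNw)]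
  exact sub_lt_mul_of_chaining hC0 hγ0 hb3 hε.1 hΛ1 hCγb hwlow hwNw hmid hchain
end

section
/- (Conditional overshoot bound; Proposition 6.5 of Adler–Blanchet–Liu.) Let {f(t) : t ∈ T} be a centered, unit-variance, almost surely continuous Gaussian random field on a compact T ⊂ ℝ^d whose correlation satisfies |r(t,s) − r(t',s')| ≤ κ_H'(|t−t'|^{β'} + |s−s'|^{β'}), and let (σ, μ) belong to the class C(μ_l, μ_u, σ_l, σ_u, β, κ_H). For any v > 0, let β* = min(β, β') and ρ = 2d/β* + dv + 1. Then there exist constants b_0, λ ∈ (0, ∞) such that for all b ≥ b_0 ≥ 1 and all γ ∈ (0, 1], P( max_{t∈T}(σ(t)f(t) + μ(t)) ≤ b + γ/b | max_{t∈T}(σ(t)f(t) + μ(t)) > b ) ≤ λ γ b^ρ. -/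
open MeasureTheory ProbabilityTheory Filter Set

lemma gaussianPDFReal_std (x : ℝ) :
    gaussianPDFReal 0 1 x = (√(2 * Real.pi))⁻¹ * Real.exp (-(x ^ 2 / 2)) := by
  simp [gaussianPDFReal, neg_div]

lemma hasDerivAt_gaussianPDFReal_std (x : ℝ) :
    HasDerivAt (gaussianPDFReal 0 1) (-(x * gaussianPDFReal 0 1 x)) x := by
  have h : HasDerivAt (fun x : ℝ => -(x ^ 2 / 2)) (-x) x := by
    simpa using ((hasDerivAt_pow 2 x).div_const 2).fun_neg
  refine ((h.exp.const_mul (√(2 * Real.pi))⁻¹).congr_deriv ?_).congr_of_eventuallyEq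
    (.of_forall gaussianPDFReal_std)
  rw [gaussianPDFReal_std]
  ring

lemma gaussianPDF_std_anti {x y : ℝ} (h : |x| ≤ |y|) :
    gaussianPDF 0 1 y ≤ gaussianPDF 0 1 x := by
  refine ENNReal.ofReal_le_ofReal ?_
  have := sq_le_sq.2 h
  rw [gaussianPDFReal_std, gaussianPDFReal_std]
  gcongr

lemma integrable_mul_gaussianPDFReal_std :
    Integrable (fun x : ℝ => x * gaussianPDFReal 0 1 x) := by
  convert (integrable_mul_exp_neg_mul_sq (b := 1 / 2) (by norm_num)).const_mul
    (√(2 * Real.pi))⁻¹ using 2 with x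
  rw [gaussianPDFReal_std, show -(x ^ 2 / 2) = -(1 / 2) * x ^ 2 by ring]
  ring

lemma tendsto_gaussianPDFReal_std : Tendsto (gaussianPDFReal 0 1) atTop (nhds 0) := by
  have h : Tendsto (fun x : ℝ => x ^ 2 / 2) atTop atTop :=
    (tendsto_pow_atTop two_ne_zero).atTop_div_const two_pos
  have := (Real.tendsto_exp_neg_atTop_nhds_zero.comp h).const_mul (√(2 * Real.pi))⁻¹
  rw [mul_zero] at this
  exact this.congr fun x => (gaussianPDFReal_std x).symm

lemma setLIntegral_Ioi_ofReal_gaussianReal_std {z : ℝ} (hz : 0 ≤ z) :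
    ∫⁻ x in Ioi z, ENNReal.ofReal x ∂gaussianReal 0 1 = gaussianPDF 0 1 z := by
  have hI : ∫ x in Ioi z, x * gaussianPDFReal 0 1 x = gaussianPDFReal 0 1 z := by
    have := integral_Ioi_of_hasDerivAt_of_tendsto' (a := z) (m := 0)
      (f := fun x => -gaussianPDFReal 0 1 x) (f' := fun x => x * gaussianPDFReal 0 1 x)
      (fun x _ => by simpa using (hasDerivAt_gaussianPDFReal_std x).fun_neg)
      integrable_mul_gaussianPDFReal_std.integrableOn
      (by simpa using tendsto_gaussianPDFReal_std.neg)
    simpa using this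
  rw [gaussianPDF, ← hI, ofReal_integral_eq_lintegral_ofReal
      integrable_mul_gaussianPDFReal_std.integrableOn,
    gaussianReal_of_var_ne_zero 0 one_ne_zero,
    setLIntegral_withDensity_eq_setLIntegral_mul _ (measurable_gaussianPDF 0 1)
      ENNReal.measurable_ofReal measurableSet_Ioi]
  · refine setLIntegral_congr_fun measurableSet_Ioi fun x hx => ?_
    rw [Pi.mul_apply, gaussianPDF, ← ENNReal.ofReal_mul (gaussianPDFReal_nonneg 0 1 x), mul_comm]
  · filter_upwards [ae_restrict_mem measurableSet_Ioi] with x hx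
    exact mul_nonneg (hz.trans hx.out.le) (gaussianPDFReal_nonneg 0 1 x)

lemma gaussianPDF_std_le_setLIntegral_Ioi (z : ℝ) :
    gaussianPDF 0 1 z ≤ ∫⁻ x in Ioi z, ENNReal.ofReal x ∂gaussianReal 0 1 := by
  rcases le_total 0 z with hz | hz
  · exact (setLIntegral_Ioi_ofReal_gaussianReal_std hz).ge
  · calc gaussianPDF 0 1 z ≤ gaussianPDF 0 1 0 := gaussianPDF_std_anti (by simp)
      _ = ∫⁻ x in Ioi 0, ENNReal.ofReal x ∂gaussianReal 0 1 :=
        (setLIntegral_Ioi_ofReal_gaussianReal_std le_rfl).symm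
      _ ≤ _ := lintegral_mono_set (Ioi_subset_Ioi hz)

/-- A subset of an upper set `S` has standard Gaussian measure at most its diameter times
`E[Z⁺; Z ∈ S]`. -/
lemma gaussianReal_std_le_ediam_mul_setLIntegral {S E : Set ℝ} (hS : IsUpperSet S) (hE : E ⊆ S) :
    gaussianReal 0 1 E ≤ Metric.ediam E * ∫⁻ x in S, ENNReal.ofReal x ∂gaussianReal 0 1 := by
  rw [gaussianReal_apply 0 one_ne_zero]
  calc ∫⁻ x in E, gaussianPDF 0 1 x
      ≤ ∫⁻ _ in E, ∫⁻ x in S, ENNReal.ofReal x ∂gaussianReal 0 1 :=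
        setLIntegral_mono measurable_const fun z hz =>
          (gaussianPDF_std_le_setLIntegral_Ioi z).trans <|
            lintegral_mono_set fun w hw => hS hw.out.le (hE hz)
    _ = (∫⁻ x in S, ENNReal.ofReal x ∂gaussianReal 0 1) * volume E := setLIntegral_const _ _
    _ ≤ _ := by rw [mul_comm]; gcongr; exact Real.volume_le_diam E

lemma gaussianPDF_std_le_gaussianReal_Ioi {x y : ℝ} (hx : 0 ≤ x) (hxy : x + 1 ≤ y) :
    gaussianPDF 0 1 y ≤ gaussianReal 0 1 (Ioi x) := by
  calc gaussianPDF 0 1 y = ∫⁻ _ in Ioc x (x + 1), gaussianPDF 0 1 y := by simp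
    _ ≤ ∫⁻ z in Ioc x (x + 1), gaussianPDF 0 1 z :=
        setLIntegral_mono (measurable_gaussianPDF 0 1) fun z hz => gaussianPDF_std_anti (by
          rw [abs_of_nonneg (hx.trans hz.1.le), abs_of_nonneg (by linarith)]
          exact hz.2.trans hxy)
    _ = gaussianReal 0 1 (Ioc x (x + 1)) := (gaussianReal_apply 0 one_ne_zero _).symm
    _ ≤ _ := measure_mono Ioc_subset_Ioi_self

/-- If every slope `a i` is at least `c`, then the supremum of `a i * Z + Y i`, with `Z` standard
Gaussian independent of `Y`, lands in `(b, b + δ]` with probability at most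
`δ / c * E[Z⁺; sup > b]`. -/
lemma measure_exists_gt_and_forall_le_le_mul_setLIntegral {Ω ι : Type*} [MeasurableSpace Ω]
    [Countable ι] {P : Measure Ω} [IsProbabilityMeasure P] {Z : Ω → ℝ} {Y : Ω → ι → ℝ}
    (hZ : Measurable Z) (hY : Measurable Y) (hlaw : P.map Z = gaussianReal 0 1)
    (hind : IndepFun Z Y P) {a : ι → ℝ} {c : ℝ} (hc : 0 < c) (ha : ∀ i, c ≤ a i)
    (b : ℝ) {δ : ℝ} (hδ : 0 ≤ δ) :
    P {ω | (∃ i, b < a i * Z ω + Y ω i) ∧ ∀ i, a i * Z ω + Y ω i ≤ b + δ} ≤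
      ENNReal.ofReal (δ / c) *
        ∫⁻ ω in {ω | ∃ i, b < a i * Z ω + Y ω i}, ENNReal.ofReal (Z ω) ∂P := by
  set S : Set (ℝ × (ι → ℝ)) := {p | ∃ i, b < a i * p.1 + p.2 i} with hSdef
  set E : Set (ℝ × (ι → ℝ)) := {p | (∃ i, b < a i * p.1 + p.2 i) ∧
    ∀ i, a i * p.1 + p.2 i ≤ b + δ} with hEdef
  have hm : ∀ i, Measurable fun p : ℝ × (ι → ℝ) => a i * p.1 + p.2 i := fun i => by fun_prop
  have hS : MeasurableSet S := by
    rw [hSdef, ofPred_exists]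
    exact .iUnion fun i => measurableSet_lt measurable_const (hm i)
  have hE : MeasurableSet E := by
    rw [hEdef, ofPred_and, ofPred_forall]
    exact hS.inter (.iInter fun i => measurableSet_le (hm i) measurable_const)
  have hYp : IsProbabilityMeasure (P.map Y) := Measure.isProbabilityMeasure_map hY.aemeasurable
  have hmap : P.map (fun ω => (Z ω, Y ω)) = (gaussianReal 0 1).prod (P.map Y) := by
    rw [(indepFun_iff_map_prod_eq_prod_map_map hZ.aemeasurable hY.aemeasurable).1 hind, hlaw]
  have hleft : P {ω | (∃ i, b < a i * Z ω + Y ω i) ∧ ∀ i, a i * Z ω + Y ω i ≤ b + δ} =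
      ∫⁻ y, gaussianReal 0 1 ((fun z => (z, y)) ⁻¹' E) ∂P.map Y := by
    rw [← Measure.prod_apply_symm hE, ← hmap, Measure.map_apply (hZ.prodMk hY) hE]
    rfl
  have hright : ∫⁻ ω in {ω | ∃ i, b < a i * Z ω + Y ω i}, ENNReal.ofReal (Z ω) ∂P =
      ∫⁻ y, ∫⁻ z in (fun z => (z, y)) ⁻¹' S, ENNReal.ofReal z ∂gaussianReal 0 1 ∂P.map Y := by
    have hg : Measurable (S.indicator fun p => ENNReal.ofReal p.1) :=
      (ENNReal.measurable_ofReal.comp measurable_fst).indicator hS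
    have h1 := setLIntegral_map (μ := P) hS (ENNReal.measurable_ofReal.comp measurable_fst)
      (hZ.prodMk hY)
    rw [hmap] at h1
    refine h1.symm.trans ?_
    rw [← lintegral_indicator hS]
    refine (lintegral_prod_symm' _ hg).trans ?_
    refine lintegral_congr fun y => ?_
    rw [← lintegral_indicator (measurable_prodMk_right hS)]
    rfl
  rw [hleft, hright, ← lintegral_const_mul' _ _ ENNReal.ofReal_ne_top]
  refine lintegral_mono fun y => ?_
  have hup : IsUpperSet ((fun z : ℝ => (z, y)) ⁻¹' S) := by
    rintro z w hzw ⟨i, hi⟩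
    refine ⟨i, hi.trans_le ?_⟩
    have := hc.le.trans (ha i)
    dsimp only
    gcongr
  refine (gaussianReal_std_le_ediam_mul_setLIntegral hup fun z hz => hz.1).trans ?_
  gcongr
  refine Metric.ediam_le fun z hz w hw => ?_
  rw [edist_dist]
  refine ENNReal.ofReal_le_ofReal ?_
  have key : ∀ z w : ℝ, (z, y) ∈ S → (w, y) ∈ E → w - z ≤ δ / c := by
    rintro z w ⟨i, hi⟩ ⟨-, hw⟩
    have hw := hw i
    dsimp only at hi hw
    rw [le_div_iff₀ hc]
    rcases le_total w z with h | h
    · exact (mul_nonpos_of_nonpos_of_nonneg (by linarith) hc.le).trans hδ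
    · nlinarith [ha i]
  rw [Real.dist_eq, abs_le]
  constructor <;> linarith [key z w hz.1 hw, key w z hw.1 hz]

lemma isGaussianProcess_of_map_sum_eq_gaussianReal {Ω S : Type*} [MeasurableSpace Ω]
    {P : Measure Ω} {X : S → Ω → ℝ} (hX : ∀ t, Measurable (X t))
    (h : ∀ (I : Finset S) (c : S → ℝ), ∃ m v,
      P.map (fun ω => ∑ t ∈ I, c t * X t ω) = gaussianReal m v) :
    IsGaussianProcess X P where
  hasGaussianLaw I := by
    classical
    constructor
    refine isGaussian_of_map_eq_gaussianReal fun L => ?_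
    obtain ⟨m, v, hmv⟩ := h I fun t =>
      if ht : t ∈ I then L (Pi.single ⟨t, ht⟩ 1) else 0
    refine ⟨m, v, ?_⟩
    have hr : Measurable fun ω => I.restrict (X · ω) := measurable_pi_lambda _ fun i => hX i
    rw [← hmv, Measure.map_map L.continuous.measurable hr]
    congr 1
    ext ω
    rw [Function.comp_apply, ← Finset.sum_coe_sort I]
    conv_lhs => rw [← Finset.univ_sum_single (I.restrict (X · ω)), map_sum]
    refine Finset.sum_congr rfl fun i _ => ?_
    have : Pi.single i (I.restrict (X · ω) i) = X i ω • (Pi.single i 1 : I → ℝ) := by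
      rw [← Pi.single_smul]; simp
    rw [this, map_smul, smul_eq_mul, mul_comm]
    simp

/-- In a Gaussian process, the residuals of the regression on a unit variance coordinate are
independent of that coordinate. -/
lemma ProbabilityTheory.IsGaussianProcess.indepFun_regression_residual {Ω S : Type*}
    [MeasurableSpace Ω] {P : Measure Ω} {X : S → Ω → ℝ} (hX : IsGaussianProcess X P)
    (o : S) (ho : Var[X o; P] = 1) :
    IndepFun (X o) (fun ω t => X t ω - cov[X o, X t; P] * X o ω) P := by
  classical
  have := hX.isProbabilityMeasure
  have hL : ∀ t, MemLp (X t) 2 P := fun t => (hX.hasGaussianLaw_eval t).memLp_two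
  have hG : IsGaussianProcess (Sum.elim (fun _ : Unit => X o)
      (fun t ω => X t ω - cov[X o, X t; P] * X o ω)) P := by
    refine hX.of_isGaussianProcess ?_
    rintro (_ | t)
    · exact ⟨{o}, .proj ⟨o, by simp⟩, fun ω => rfl⟩
    · exact ⟨{o, t}, .proj ⟨t, by simp⟩ - cov[X o, X t; P] • .proj ⟨o, by simp⟩, fun ω => rfl⟩
  have hi := hG.indepFun_of_covariance_eq_zero (fun _ => hX.aemeasurable o)
    (fun t => (hX.aemeasurable t).sub ((hX.aemeasurable o).const_mul _)) fun _ t => by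
      rw [covariance_fun_sub_right (hL o) (hL t) ((hL o).const_mul _),
        covariance_const_mul_right, covariance_self (hX.aemeasurable o), ho]
      simp
  exact hi.comp (φ := fun x : Unit → ℝ => x ()) (ψ := id) (measurable_pi_apply _) measurable_id

lemma setLIntegral_ofReal_le_of_map_eq_gaussianReal_std {Ω : Type*} [MeasurableSpace Ω]
    {P : Measure Ω} {Z : Ω → ℝ} (hZ : Measurable Z) (hlaw : P.map Z = gaussianReal 0 1)
    (A : Set Ω) {x : ℝ} (hx : 0 ≤ x) :
    ∫⁻ ω in A, ENNReal.ofReal (Z ω) ∂P ≤ ENNReal.ofReal x * P A + gaussianPDF 0 1 x := by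
  have hm : MeasurableSet (Z ⁻¹' Ioi x) := hZ measurableSet_Ioi
  calc ∫⁻ ω in A, ENNReal.ofReal (Z ω) ∂P
      ≤ ∫⁻ ω in A, (ENNReal.ofReal x +
          (Z ⁻¹' Ioi x).indicator (fun ω => ENNReal.ofReal (Z ω)) ω) ∂P := by
        refine lintegral_mono fun ω => ?_
        by_cases h : x < Z ω
        · rw [indicator_of_mem (show ω ∈ Z ⁻¹' Ioi x from h)]
          exact le_add_self
        · exact le_add_right (ENNReal.ofReal_le_ofReal (not_lt.1 h))
    _ = ENNReal.ofReal x * P A +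
          ∫⁻ ω in A, (Z ⁻¹' Ioi x).indicator (fun ω => ENNReal.ofReal (Z ω)) ω ∂P := by
        rw [lintegral_add_left measurable_const, setLIntegral_const]
    _ ≤ ENNReal.ofReal x * P A + ∫⁻ ω in Z ⁻¹' Ioi x, ENNReal.ofReal (Z ω) ∂P := by
        rw [← lintegral_indicator hm]
        exact add_le_add le_rfl (setLIntegral_le_lintegral _ _)
    _ = _ := by
        rw [← setLIntegral_map measurableSet_Ioi ENNReal.measurable_ofReal hZ, hlaw,
          setLIntegral_Ioi_ofReal_gaussianReal_std hx]

lemma DenseRange.exists_mem_lt_of_continuous {α ι : Type*} [TopologicalSpace α] {q : ι → α}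
    (hq : DenseRange q) {U : Set α} (hU : IsOpen U) {g : α → ℝ} (hg : Continuous g) {b : ℝ}
    {x : α} (hx : x ∈ U) (hb : b < g x) : ∃ i, q i ∈ U ∧ b < g (q i) :=
  hq.exists_mem_open (hU.inter (isOpen_lt continuous_const hg)) ⟨x, hx, hb⟩

lemma continuousOn_of_abs_sub_le_rpow_dist {α : Type*} [PseudoMetricSpace α] {T : Set α}
    {g : α → ℝ} {κ β : ℝ} (hβ : 0 < β)
    (h : ∀ s ∈ T, ∀ u ∈ T, |g u - g s| ≤ κ * dist s u ^ β) : ContinuousOn g T := by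
  intro s hs
  refine tendsto_iff_dist_tendsto_zero.2 ?_
  have hlim : Tendsto (fun u => κ * dist s u ^ β) (nhdsWithin s T) (nhds 0) := by
    have hc : Continuous fun u => κ * dist s u ^ β :=
      continuous_const.mul ((continuous_const.dist continuous_id).rpow_const fun _ => .inr hβ.le)
    simpa [Real.zero_rpow hβ.ne'] using (hc.tendsto s).mono_left nhdsWithin_le_nhds
  refine squeeze_zero' (.of_forall fun _ => dist_nonneg) ?_ hlim
  filter_upwards [self_mem_nhdsWithin] with u hu
  exact h s hs u hu

/-- **Conditional overshoot bound (Proposition 6.5 of Adler–Blanchet–Liu).**  For a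
centered, unit-variance, a.s. continuous Gaussian field on a compact `T ⊂ ℝ^d` whose
correlation is Hölder (C4), and `(σ,μ)` in the Hölder class `C(μ_l,μ_u,σ_l,σ_u,β,κ_H)`:
for any `v > 0`, with `β* = min(β,β')` and `ρ = 2d/β* + dv + 1`, there exist `b₀ ≥ 1` and
`λ ∈ (0,∞)` such that for all `b ≥ b₀` and all `γ ∈ (0,1]`,
`P( max_{t∈T}(σ f + μ) ≤ b + γ/b | max_{t∈T}(σ f + μ) > b ) ≤ λ γ b^ρ`. -/
theorem conditional_overshoot_bound
    {Ω : Type*} [MeasurableSpace Ω] (P : Measure Ω) [IsProbabilityMeasure P]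
    {d : ℕ} (T : Set (EuclideanSpace ℝ (Fin d)))
    (hT : IsCompact T) (hTne : T.Nonempty)
    (f : EuclideanSpace ℝ (Fin d) → Ω → ℝ)
    (hmeas : ∀ u, Measurable (f u))
    (hGauss : ∀ s : Finset (EuclideanSpace ℝ (Fin d)), ↑s ⊆ T →
      ∀ c : EuclideanSpace ℝ (Fin d) → ℝ, ∃ v : NNReal,
        Measure.map (fun ω => ∑ u ∈ s, c u * f u ω) P = gaussianReal 0 v)
    (hstd : ∀ u ∈ T, Measure.map (f u) P = gaussianReal 0 1)
    (hcont : ∀ᵐ ω ∂P, ContinuousOn (fun u => f u ω) T)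
    (μl μu σl σu β κH β' κH' : ℝ)
    (hμ : μl ≤ μu) (hσl : 0 < σl) (hσ : σl ≤ σu) (hβ : 0 < β) (hκH : 0 < κH)
    (hβ' : 0 < β') (hκH' : 0 < κH')
    (hC4 : ∀ s ∈ T, ∀ u ∈ T, ∀ s' ∈ T, ∀ u' ∈ T,
      |(∫ ω, f u ω * f s ω ∂P) - (∫ ω, f u' ω * f s' ω ∂P)| ≤
        κH' * (dist u u' ^ β' + dist s s' ^ β'))
    (σ μ : EuclideanSpace ℝ (Fin d) → ℝ)
    (hσr : ∀ u ∈ T, σ u ∈ Set.Icc σl σu) (hμr : ∀ u ∈ T, μ u ∈ Set.Icc μl μu)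
    (hHolder : ∀ s ∈ T, ∀ u ∈ T, |σ u - σ s| + |μ u - μ s| ≤ κH * dist s u ^ β) :
    ∀ v > (0 : ℝ), ∃ b0 ≥ (1 : ℝ), ∃ lam > (0 : ℝ), ∀ b ≥ b0, ∀ γ ∈ Set.Ioc (0 : ℝ) 1,
      (ProbabilityTheory.cond P {ω | ∃ u ∈ T, σ u * f u ω + μ u > b})
          {ω | ∀ u ∈ T, σ u * f u ω + μ u ≤ b + γ / b} ≤
        ENNReal.ofReal (lam * γ * b ^ (2 * (d : ℝ) / min β β' + (d : ℝ) * v + 1)) := by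
  intro v hv
  have hTsub : Nonempty T := hTne.to_subtype
  -- The field restricted to `T` is a Gaussian process with unit variances.
  have hproc : IsGaussianProcess (fun (t : T) ω => f t ω) P := by
    refine isGaussianProcess_of_map_sum_eq_gaussianReal (fun t => hmeas t) fun I c => ?_
    obtain ⟨w, hw⟩ := hGauss (I.map (Function.Embedding.subtype _)) (by simp)
      (Function.extend Subtype.val c 0)
    refine ⟨0, w, ?_⟩
    rw [← hw]
    congr 1
    ext ω
    rw [Finset.sum_map]
    exact Finset.sum_congr rfl fun t _ => by
      rw [Function.Embedding.subtype_apply, Subtype.val_injective.extend_apply]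
  have hL : ∀ t : T, MemLp (f t) 2 P := fun t => (hproc.hasGaussianLaw_eval t).memLp_two
  have hmean : ∀ t : T, ∫ ω, f t ω ∂P = 0 := fun t => by
    have := integral_map (μ := P) (hmeas t).aemeasurable (f := fun x : ℝ => x)
      measurable_id.aestronglyMeasurable
    rw [← this, hstd t t.2, integral_id_gaussianReal]
  have hvar : ∀ t : T, Var[f t; P] = 1 := fun t => by
    have := variance_map (μ := P) (X := fun x : ℝ => x) (Y := f t) aemeasurable_id
      (hmeas t).aemeasurable
    rw [hstd t t.2, variance_fun_id_gaussianReal] at this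
    exact this.symm
  have hcov : ∀ s t : T, cov[f s, f t; P] = ∫ ω, f s ω * f t ω ∂P := fun s t => by
    rw [covariance_eq_sub (hL s) (hL t), hmean s, hmean t, mul_zero, sub_zero]
    rfl
  -- On balls of radius `η` the correlation is at least `1 / 2`.
  obtain ⟨η, hη, hηκ⟩ : ∃ η > 0, κH' * η ^ β' ≤ 1 / 2 := by
    refine ⟨(1 / (2 * κH')) ^ β'⁻¹, by positivity, le_of_eq ?_⟩
    rw [Real.rpow_inv_rpow (by positivity) hβ'.ne']
    field_simp
  have hcorr : ∀ o t : T, dist t o < η → 1 / 2 ≤ cov[f o, f t; P] := fun o t hot => by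
    have h1 := hC4 o o.2 t t.2 o o.2 o o.2
    have h2 : ∫ ω, f o ω * f o ω ∂P = 1 := by
      rw [← hcov, covariance_self (hmeas o).aemeasurable, hvar]
    have h3 : κH' * (dist (t : EuclideanSpace ℝ (Fin d)) o) ^ β' ≤ κH' * η ^ β' := by
      gcongr
      exact hot.le
    rw [h2, dist_self, Real.zero_rpow hβ'.ne', add_zero] at h1
    rw [hcov]
    simp_rw [mul_comm (f o _)]
    linarith [(abs_le.1 h1).1]
  obtain ⟨K, hKT, hKfin, hKcov⟩ := hT.finite_cover_balls hη
  lift K to Finset (EuclideanSpace ℝ (Fin d)) using hKfin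
  obtain ⟨t₀, ht₀⟩ := hTne
  set m : ℝ := (1 + |μ t₀|) / σl with hm_def
  have hm : 0 ≤ m := by positivity
  refine ⟨1, le_rfl, K.card * (2 / σl * (m + 2)) + 1, by positivity, fun b hb γ hγ => ?_⟩
  have hb0 : 0 < b := by linarith
  set A : Set Ω := {ω | ∃ u ∈ T, σ u * f u ω + μ u > b}
  set B : Set Ω := {ω | ∀ u ∈ T, σ u * f u ω + μ u ≤ b + γ / b}
  have hδ : 0 ≤ γ / b := div_nonneg hγ.1.le hb0.le
  set q : ℕ → T := TopologicalSpace.denseSeq T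
  have hqd : DenseRange q := TopologicalSpace.denseRange_denseSeq T
  have hpath : ∀ᵐ ω ∂P, Continuous fun t : T => σ t * f t ω + μ t := by
    have hσc : ContinuousOn σ T := continuousOn_of_abs_sub_le_rpow_dist hβ fun s hs u hu =>
      (le_add_of_nonneg_right (abs_nonneg _)).trans (hHolder s hs u hu)
    have hμc : ContinuousOn μ T := continuousOn_of_abs_sub_le_rpow_dist hβ fun s hs u hu =>
      (le_add_of_nonneg_left (abs_nonneg _)).trans (hHolder s hs u hu)
    filter_upwards [hcont] with ω hω
    exact ((hσc.mul hω).add hμc).domRestrict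
  have hAmeas : NullMeasurableSet A P := by
    refine NullMeasurableSet.congr (s := {ω | ∃ n, b < σ (q n) * f (q n) ω + μ (q n)}) ?_ ?_
    · rw [ofPred_exists]
      exact (MeasurableSet.iUnion fun n => measurableSet_lt measurable_const
        (((hmeas _).const_mul _).add_const _)).nullMeasurableSet
    · refine eventuallyEq_set.2 ?_
      filter_upwards [hpath] with ω hω
      constructor
      · rintro ⟨n, hn⟩
        exact ⟨q n, (q n).2, hn⟩
      · rintro ⟨u, hu, hub⟩
        obtain ⟨n, -, hn⟩ := hqd.exists_mem_lt_of_continuous isOpen_univ hω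
          (mem_univ (⟨u, hu⟩ : T)) hub
        exact ⟨n, hn⟩
  have htail : gaussianPDF 0 1 ((m + 1) * b) ≤ P A := by
    refine (gaussianPDF_std_le_gaussianReal_Ioi (x := m * b) (by positivity) (by linarith)).trans ?_
    rw [← hstd t₀ ht₀, Measure.map_apply (hmeas t₀) measurableSet_Ioi]
    refine measure_mono fun ω hω => ⟨t₀, ht₀, ?_⟩
    have hω : m * b < f t₀ ω := hω
    have h1 : σl * (m * b) = (1 + |μ t₀|) * b := by rw [hm_def]; field_simp
    have h2 : σl * (m * b) ≤ σ t₀ * (m * b) := by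
      gcongr
      exact (hσr t₀ ht₀).1
    have h3 : σ t₀ * (m * b) < σ t₀ * f t₀ ω :=
      mul_lt_mul_of_pos_left hω (hσl.trans_le (hσr t₀ ht₀).1)
    nlinarith [neg_abs_le (μ t₀), abs_nonneg (μ t₀)]
  have hposmean : ∀ o ∈ T, ∫⁻ ω in A, ENNReal.ofReal (f o ω) ∂P ≤
      ENNReal.ofReal ((m + 2) * b) * P A := fun o ho => by
    refine (setLIntegral_ofReal_le_of_map_eq_gaussianReal_std (hmeas o) (hstd o ho) A
      (x := (m + 1) * b) (by positivity)).trans ?_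
    calc ENNReal.ofReal ((m + 1) * b) * P A + gaussianPDF 0 1 ((m + 1) * b)
        ≤ ENNReal.ofReal ((m + 1) * b) * P A + ENNReal.ofReal b * P A := by
          gcongr
          refine htail.trans (le_mul_of_one_le_left' ?_)
          rwa [ENNReal.one_le_ofReal]
      _ = ENNReal.ofReal ((m + 2) * b) * P A := by
          rw [← add_mul, ← ENNReal.ofReal_add (by positivity) hb0.le]
          ring_nf
  -- The overshoot bound for the supremum over one ball.
  have hball : ∀ o ∈ K, P {ω | (∃ n : {n // dist (q n : EuclideanSpace ℝ (Fin d)) o < η},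
        b < σ (q n) * f (q n) ω + μ (q n)) ∧
      ∀ n : {n // dist (q n : EuclideanSpace ℝ (Fin d)) o < η},
        σ (q n) * f (q n) ω + μ (q n) ≤ b + γ / b} ≤
      ENNReal.ofReal (2 / σl * (m + 2) * γ) * P A := fun o hoK => by
    have ho : o ∈ T := hKT hoK
    let r : T → ℝ := fun t => cov[f o, f t; P]
    let ψ : (T → ℝ) → {n // dist (q n : EuclideanSpace ℝ (Fin d)) o < η} → ℝ :=
      fun y n => σ (q n) * y (q n) + μ (q n)
    have hψ : Measurable ψ := measurable_pi_lambda _ fun n =>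
      ((measurable_pi_apply _).const_mul _).add_const _
    have hind := (hproc.indepFun_regression_residual ⟨o, ho⟩ (hvar ⟨o, ho⟩)).comp
      measurable_id hψ
    have hres : Measurable fun ω (t : T) => f t ω - r t * f o ω :=
      measurable_pi_lambda _ fun t => (hmeas t).sub ((hmeas o).const_mul _)
    have hover := measure_exists_gt_and_forall_le_le_mul_setLIntegral
      (hmeas o) (hψ.comp hres) (hstd o ho) hind (a := fun n => σ (q n) * r (q n))
      (c := σl / 2) (by positivity) (fun n => by
        have h1 : 1 / 2 ≤ r (q n) := hcorr ⟨o, ho⟩ (q n) n.2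
        have h2 := (hσr (q n) (q n).2).1
        nlinarith) b hδ
    have hX : ∀ (n : {n // dist (q n : EuclideanSpace ℝ (Fin d)) o < η}) ω,
        σ (q n) * r (q n) * f o ω + (ψ ∘ fun ω (t : T) => f t ω - r t * f o ω) ω n =
          σ (q n) * f (q n) ω + μ (q n) := fun n ω => by
      simp only [ψ, Function.comp_apply]
      ring
    simp only [hX] at hover
    refine hover.trans ?_
    calc _ ≤ ENNReal.ofReal (γ / b / (σl / 2)) * (ENNReal.ofReal ((m + 2) * b) * P A) := by
          gcongr
          refine (lintegral_mono_set ?_).trans (hposmean o ho)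
          rintro ω ⟨n, hn⟩
          exact ⟨q n, (q n).2, hn⟩
      _ = _ := by
          rw [← mul_assoc, ← ENNReal.ofReal_mul (by positivity)]
          congr 2
          field_simp
  have hAB : P (A ∩ B) ≤ ENNReal.ofReal (K.card * (2 / σl * (m + 2)) * γ) * P A := by
    calc P (A ∩ B) ≤ P (⋃ o ∈ K,
          {ω | (∃ n : {n // dist (q n : EuclideanSpace ℝ (Fin d)) o < η},
            b < σ (q n) * f (q n) ω + μ (q n)) ∧
          ∀ n : {n // dist (q n : EuclideanSpace ℝ (Fin d)) o < η},
            σ (q n) * f (q n) ω + μ (q n) ≤ b + γ / b}) := by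
          refine measure_mono_ae ?_
          filter_upwards [hpath] with ω hω
          rintro ⟨⟨u, hu, hub⟩, hωB⟩
          obtain ⟨o, hoK, huo⟩ := mem_iUnion₂.1 (hKcov hu)
          obtain ⟨n, hno, hn⟩ := hqd.exists_mem_lt_of_continuous
            (U := {t : T | dist (t : EuclideanSpace ℝ (Fin d)) o < η})
            (isOpen_lt (by fun_prop) continuous_const) hω (x := ⟨u, hu⟩) huo hub
          exact mem_iUnion₂.2 ⟨o, hoK, ⟨⟨n, hno⟩, hn⟩, fun k => hωB _ (q k).2⟩
      _ ≤ ∑ o ∈ K, ENNReal.ofReal (2 / σl * (m + 2) * γ) * P A :=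
          (measure_biUnion_finset_le _ _).trans (Finset.sum_le_sum hball)
      _ = _ := by
          rw [Finset.sum_const, nsmul_eq_mul, ← mul_assoc, ← ENNReal.ofReal_natCast,
            ← ENNReal.ofReal_mul (by positivity), mul_assoc (K.card : ℝ)]
  rw [ProbabilityTheory.cond, Measure.smul_apply, smul_eq_mul,
    Measure.restrict_apply₀' hAmeas, inter_comm]
  have hγ0 := hγ.1
  have hρ : 1 ≤ b ^ (2 * (d : ℝ) / min β β' + (d : ℝ) * v + 1) :=
    Real.one_le_rpow hb (by have := lt_min hβ hβ'; positivity)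
  calc (P A)⁻¹ * P (A ∩ B)
      ≤ (P A)⁻¹ * (P A * ENNReal.ofReal (K.card * (2 / σl * (m + 2)) * γ)) := by
        rw [mul_comm (P A)]
        gcongr
    _ ≤ ENNReal.ofReal (K.card * (2 / σl * (m + 2)) * γ) := by
        rw [← mul_assoc]
        exact mul_le_of_le_one_left' (ENNReal.inv_mul_le_one _)
    _ ≤ _ := by
        refine ENNReal.ofReal_le_ofReal ?_
        refine le_trans ?_ (le_mul_of_one_le_right (by positivity) hρ)
        gcongr
        linarith
end

section
/- Let {f(t) : t ∈ T} be a centered, unit-variance, almost surely continuous Gaussian random field on a compact T ⊂ ℝ^d with correlation satisfying |r(t,s) − r(t',s')| ≤ κ_H'(|t−t'|^{β'} + |s−s'|^{β'}), and let σ belong to the class C1 (σ(t) ∈ [σ_l, σ_u], Hölder with exponent β and constant κ_H). Define ξ(s,t) = σ(s)f(s) − σ(t)f(t) and β* = min(β, β'). Then there exists a constant κ_ξ > 0, uniform over all such σ and f, such that for all N ≥ 2, E[ sup_{s,t ∈ T, |s−t| ≤ κ_m/N} |ξ(s,t)| ] < κ_ξ · N^{−β*/2} · log N. -/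
open MeasureTheory ProbabilityTheory Filter Set

/-- A bounded subset of Euclidean space has, at every scale `1 / m`, an inner net of cardinality
at most `(C * m) ^ d`. -/
lemma exists_grid_net {d : ℕ} {T : Set (EuclideanSpace ℝ (Fin d))} (hT : Bornology.IsBounded T) :
    ∃ C : ℕ, 1 ≤ C ∧ ∀ m : ℕ, 1 ≤ m → ∃ F : Finset (EuclideanSpace ℝ (Fin d)),
      (↑F : Set (EuclideanSpace ℝ (Fin d))) ⊆ T ∧ F.card ≤ (C * m) ^ d ∧
        ∀ t ∈ T, ∃ u ∈ F, dist t u ≤ √d / m := by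
  classical
  obtain ⟨R₀, hR₀⟩ := hT.exists_norm_le
  obtain ⟨R, hR⟩ := exists_nat_ge R₀
  refine ⟨2 * R + 1, by omega, fun m hm => ?_⟩
  have hm0 : (0 : ℝ) < m := by exact_mod_cast hm
  let g : EuclideanSpace ℝ (Fin d) → Fin d → ℤ := fun t i => ⌊(m : ℝ) * t i⌋
  let B : Finset (Fin d → ℤ) :=
    Fintype.piFinset fun _ => Finset.Icc (-((R * m : ℕ) : ℤ)) (R * m : ℕ)
  have hgB : ∀ t ∈ T, g t ∈ B := by
    intro t ht
    simp only [B, g, Fintype.mem_piFinset, Finset.mem_Icc]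
    intro i
    have h1 : |t i| ≤ R := by
      have := (PiLp.norm_apply_le t i).trans ((hR₀ t ht).trans hR)
      simpa using this
    have h2 := abs_le.1 h1
    constructor
    · rw [Int.le_floor]; push_cast; nlinarith
    · rw [← Int.cast_le (R := ℝ)]
      refine (Int.floor_le _).trans ?_
      push_cast; nlinarith
  have hfin : (g '' T).Finite := B.finite_toSet.subset (by rintro _ ⟨t, ht, rfl⟩; exact hgB t ht)
  have hrep : ∀ z : Fin d → ℤ, ∃ u, z ∈ g '' T → u ∈ T ∧ g u = z := by
    intro z
    by_cases hz : z ∈ g '' T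
    · obtain ⟨u, hu⟩ := hz
      exact ⟨u, fun _ => hu⟩
    · exact ⟨0, fun h => absurd h hz⟩
  choose rep hrep using hrep
  refine ⟨hfin.toFinset.image rep, ?_, ?_, ?_⟩
  · intro u hu
    simp only [Finset.coe_image, Set.Finite.coe_toFinset] at hu
    obtain ⟨z, hz, rfl⟩ := hu
    exact (hrep z hz).1
  · calc (hfin.toFinset.image rep).card ≤ hfin.toFinset.card := Finset.card_image_le
      _ ≤ B.card := Finset.card_le_card (by
          intro z hz
          obtain ⟨t, ht, rfl⟩ := (Set.Finite.mem_toFinset _).1 hz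
          exact hgB t ht)
      _ = (2 * (R * m) + 1) ^ d := by
          simp only [B, Fintype.card_piFinset, Int.card_Icc, Finset.prod_const, Finset.card_univ,
            Fintype.card_fin]
          congr 1
          omega
      _ ≤ _ := by gcongr; nlinarith
  · intro t ht
    have hz : g t ∈ g '' T := ⟨t, ht, rfl⟩
    refine ⟨rep (g t), Finset.mem_image_of_mem _ (by simpa using hz), ?_⟩
    have hcoord : ∀ i, dist (t i) (rep (g t) i) ≤ 1 / m := by
      intro i
      have h : ⌊(m : ℝ) * t i⌋ = ⌊(m : ℝ) * rep (g t) i⌋ :=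
        (congrFun (hrep (g t) hz).2 i).symm
      have := Int.abs_sub_lt_one_of_floor_eq_floor h
      rw [← mul_sub, abs_mul, abs_of_pos hm0] at this
      rw [Real.dist_eq, le_div_iff₀ hm0]
      linarith
    rw [EuclideanSpace.dist_eq]
    refine (Real.sqrt_le_sqrt (Finset.sum_le_sum fun i _ =>
      pow_le_pow_left₀ dist_nonneg (hcoord i) 2)).trans_eq ?_
    rw [Finset.sum_const, Finset.card_univ, Fintype.card_fin, nsmul_eq_mul,
      Real.sqrt_mul (by positivity), Real.sqrt_sq (by positivity)]
    ring

/-- The exponential moment of the absolute value of a centered Gaussian variable with standard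
deviation at most `s`. -/
lemma lintegral_exp_abs_div_le {Ω : Type*} [MeasurableSpace Ω] {P : Measure Ω}
    {Y : Ω → ℝ} (hY : Measurable Y) {v : NNReal} (hlaw : P.map Y = gaussianReal 0 v)
    {s : ℝ} (hs : 0 < s) (hv : (v : ℝ) ≤ s ^ 2) :
    ∫⁻ ω, ENNReal.ofReal (Real.exp (|Y ω| / s)) ∂P ≤ ENNReal.ofReal 4 := by
  have hint : ∀ c : ℝ, Integrable (fun ω => Real.exp (c * Y ω)) P := fun c => by
    have h := integrable_exp_mul_gaussianReal (μ := 0) (v := v) c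
    rw [← hlaw] at h
    exact h.comp_measurable hY
  have hmgf : ∀ c : ℝ, c ^ 2 = (s ^ 2)⁻¹ →
      ∫⁻ ω, ENNReal.ofReal (Real.exp (c * Y ω)) ∂P ≤ ENNReal.ofReal 2 := by
    intro c hc
    rw [← ofReal_integral_eq_lintegral_ofReal (hint c) (ae_of_all _ fun _ => (Real.exp_pos _).le)]
    refine ENNReal.ofReal_le_ofReal ?_
    have h := mgf_gaussianReal hlaw c
    rw [mgf] at h
    rw [h, hc]
    have h1 : (v : ℝ) * (s ^ 2)⁻¹ ≤ 1 := by
      rw [← div_eq_mul_inv]; exact (div_le_one (by positivity)).2 hv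
    calc Real.exp (0 * c + v * (s ^ 2)⁻¹ / 2) ≤ Real.exp (1 / 2) := by
          apply Real.exp_le_exp.2; linarith
      _ ≤ 2 := by
          have h2 : Real.exp (1 / 2) ^ 2 = Real.exp 1 := by rw [← Real.exp_nat_mul]; norm_num
          have := Real.exp_one_lt_d9
          nlinarith [Real.exp_pos (1 / 2)]
  calc ∫⁻ ω, ENNReal.ofReal (Real.exp (|Y ω| / s)) ∂P
      ≤ ∫⁻ ω, (ENNReal.ofReal (Real.exp (s⁻¹ * Y ω)) +
          ENNReal.ofReal (Real.exp (-s⁻¹ * Y ω))) ∂P := by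
        refine lintegral_mono fun ω => ?_
        rw [← ENNReal.ofReal_add (Real.exp_pos _).le (Real.exp_pos _).le]
        refine ENNReal.ofReal_le_ofReal ?_
        rcases abs_cases (Y ω) with ⟨h, -⟩ | ⟨h, -⟩
        · rw [h, div_eq_inv_mul]; linarith [Real.exp_pos (-s⁻¹ * Y ω)]
        · rw [h, div_eq_inv_mul, mul_neg, ← neg_mul]; linarith [Real.exp_pos (s⁻¹ * Y ω)]
    _ ≤ ENNReal.ofReal 2 + ENNReal.ofReal 2 := by
        rw [lintegral_add_left (by fun_prop)]
        exact add_le_add (hmgf _ (by rw [inv_pow])) (hmgf _ (by rw [neg_sq, inv_pow]))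
    _ = ENNReal.ofReal 4 := by rw [← ENNReal.ofReal_add] <;> norm_num

/-- A maximal inequality for finitely many centered Gaussian variables. -/
lemma lintegral_finset_sup_gaussian_le {Ω ι : Type*} [MeasurableSpace Ω] {P : Measure Ω}
    [IsProbabilityMeasure P] (I : Finset ι) (Y : ι → Ω → ℝ)
    (hY : ∀ i ∈ I, Measurable (Y i)) {s L : ℝ} (hs : 0 < s) (hL : 0 ≤ L)
    (hlaw : ∀ i ∈ I, ∃ v : NNReal, P.map (Y i) = gaussianReal 0 v ∧ (v : ℝ) ≤ s ^ 2)
    (hcard : (I.card : ℝ) ≤ Real.exp L) :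
    ∫⁻ ω, I.sup (fun i => ENNReal.ofReal |Y i ω|) ∂P ≤ ENNReal.ofReal (s * (L + 4)) := by
  have hpt : ∀ ω, I.sup (fun i => ENNReal.ofReal |Y i ω|) ≤
      ENNReal.ofReal (s * L) + ENNReal.ofReal (s * Real.exp (-L)) *
        ∑ i ∈ I, ENNReal.ofReal (Real.exp (|Y i ω| / s)) := by
    intro ω
    refine Finset.sup_le fun i hi => ?_
    have h1 : |Y i ω| ≤ s * L + s * Real.exp (-L) * Real.exp (|Y i ω| / s) := by
      have h := Real.add_one_le_exp (-L + |Y i ω| / s)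
      rw [Real.exp_add] at h
      have h2 : s * (|Y i ω| / s) = |Y i ω| := by field_simp
      nlinarith
    calc ENNReal.ofReal |Y i ω| ≤ _ := ENNReal.ofReal_le_ofReal h1
      _ = ENNReal.ofReal (s * L) + ENNReal.ofReal (s * Real.exp (-L)) *
            ENNReal.ofReal (Real.exp (|Y i ω| / s)) := by
          rw [ENNReal.ofReal_add (by positivity) (by positivity),
            ENNReal.ofReal_mul (q := Real.exp (|Y i ω| / s)) (by positivity)]
      _ ≤ _ := by
          gcongr
          exact Finset.single_le_sum
            (f := fun i => ENNReal.ofReal (Real.exp (|Y i ω| / s))) (fun _ _ => bot_le) hi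
  have hmeas : ∀ i ∈ I, Measurable fun ω => ENNReal.ofReal (Real.exp (|Y i ω| / s)) := by
    intro i hi
    have := hY i hi
    fun_prop
  calc _ ≤ ∫⁻ ω, (ENNReal.ofReal (s * L) + ENNReal.ofReal (s * Real.exp (-L)) *
        ∑ i ∈ I, ENNReal.ofReal (Real.exp (|Y i ω| / s))) ∂P := lintegral_mono hpt
    _ = ENNReal.ofReal (s * L) + ENNReal.ofReal (s * Real.exp (-L)) *
        ∑ i ∈ I, ∫⁻ ω, ENNReal.ofReal (Real.exp (|Y i ω| / s)) ∂P := by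
      rw [lintegral_add_left measurable_const, lintegral_const,
        lintegral_const_mul _ (Finset.measurable_fun_sum _ hmeas), lintegral_finsetSum _ hmeas]
      simp
    _ ≤ ENNReal.ofReal (s * L) + ENNReal.ofReal (s * Real.exp (-L)) *
        ∑ i ∈ I, ENNReal.ofReal 4 := by
      gcongr with i hi
      obtain ⟨v, h, hv⟩ := hlaw i hi
      exact lintegral_exp_abs_div_le (hY i hi) h hs hv
    _ = ENNReal.ofReal (s * L + s * Real.exp (-L) * (I.card * 4)) := by
      rw [Finset.sum_const, nsmul_eq_mul, ENNReal.ofReal_add (by positivity) (by positivity),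
        ENNReal.ofReal_mul (q := I.card * 4) (by positivity),
        ENNReal.ofReal_mul (q := 4) (Nat.cast_nonneg _), ENNReal.ofReal_natCast]
    _ ≤ _ := by
      refine ENNReal.ofReal_le_ofReal ?_
      have h : Real.exp (-L) * I.card ≤ 1 := by
        rw [Real.exp_neg, inv_mul_le_iff₀ (Real.exp_pos _), mul_one]; exact hcard
      nlinarith

/-- The increment `σ a * f a - σ b * f b` of a Gaussian field is a centered Gaussian variable whose
variance is controlled by the moduli of continuity of `σ` and of the correlation of `f`. -/
lemma exists_gaussian_increment_law {Ω E : Type*} [MeasurableSpace Ω] {P : Measure Ω}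
    [PseudoMetricSpace E] {T : Set E} {f : E → Ω → ℝ} {σ : E → ℝ} {σl σu β κH β' κH' : ℝ}
    (hσl : 0 < σl) (hβ' : 0 < β')
    (hmeas : ∀ u, Measurable (f u))
    (hgauss : ∀ s : Finset E, ↑s ⊆ T → ∀ c : E → ℝ, ∃ v : NNReal,
      Measure.map (fun ω => ∑ u ∈ s, c u * f u ω) P = gaussianReal 0 v)
    (hunit : ∀ u ∈ T, Measure.map (f u) P = gaussianReal 0 1)
    (hcorr : ∀ s ∈ T, ∀ u ∈ T, ∀ s' ∈ T, ∀ u' ∈ T,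
      |(∫ ω, f u ω * f s ω ∂P) - (∫ ω, f u' ω * f s' ω ∂P)| ≤
        κH' * (dist u u' ^ β' + dist s s' ^ β'))
    (hσ : ∀ u ∈ T, σ u ∈ Set.Icc σl σu)
    (hσH : ∀ s ∈ T, ∀ u ∈ T, |σ u - σ s| ≤ κH * dist s u ^ β)
    {a b : E} (ha : a ∈ T) (hb : b ∈ T) :
    ∃ v : NNReal, P.map (fun ω => σ a * f a ω - σ b * f b ω) = gaussianReal 0 v ∧
      (v : ℝ) ≤ (κH * dist a b ^ β) ^ 2 + 2 * σu ^ 2 * (κH' * dist a b ^ β') := by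
  classical
  obtain ⟨v, hv⟩ : ∃ v : NNReal,
      P.map (fun ω => σ a * f a ω - σ b * f b ω) = gaussianReal 0 v := by
    by_cases hab : a = b
    · obtain ⟨v, hv⟩ := hgauss ∅ (by simp) 0
      refine ⟨v, hv ▸ ?_⟩
      simp [hab]
    · obtain ⟨v, hv⟩ := hgauss {a, b} (by simp [Set.insert_subset_iff, ha, hb])
        (fun u => if u = a then σ a else -σ b)
      refine ⟨v, hv ▸ ?_⟩
      congr 1
      ext ω
      rw [Finset.sum_pair hab]
      simp [Ne.symm hab]
      ring
  refine ⟨v, hv, ?_⟩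
  have hsq : ∀ {Y : Ω → ℝ} {w : NNReal}, Measurable Y → P.map Y = gaussianReal 0 w →
      ∫ ω, Y ω ^ 2 ∂P = w := by
    intro Y w hY hw
    have h : ∫ x, x ^ 2 ∂(P.map Y) = ∫ ω, Y ω ^ 2 ∂P :=
      integral_map hY.aemeasurable (by fun_prop)
    rw [← h, hw]
    have h2 := variance_fun_id_gaussianReal (μ := 0) (v := w)
    rw [variance_eq_integral measurable_id'.aemeasurable] at h2
    simpa using h2
  have hL2 : ∀ u ∈ T, MemLp (f u) 2 P := by
    intro u hu
    have h := memLp_id_gaussianReal (μ := 0) (v := 1) 2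
    rw [← hunit u hu, memLp_map_measure_iff (by fun_prop) (hmeas u).aemeasurable] at h
    exact h
  have hia : Integrable (fun ω => f a ω ^ 2) P := (hL2 a ha).integrable_sq
  have hib : Integrable (fun ω => f b ω ^ 2) P := (hL2 b hb).integrable_sq
  have hiab : Integrable (fun ω => f a ω * f b ω) P := (hL2 a ha).integrable_mul (hL2 b hb)
  have hma := hmeas a
  have hmb := hmeas b
  have hvar : (v : ℝ) = σ a ^ 2 + σ b ^ 2 - 2 * (σ a * σ b) * ∫ ω, f a ω * f b ω ∂P := by
    rw [← hsq (by fun_prop) hv]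
    have hexp : ∀ ω, (σ a * f a ω - σ b * f b ω) ^ 2 =
        (σ a ^ 2 * f a ω ^ 2 + σ b ^ 2 * f b ω ^ 2) - 2 * (σ a * σ b) * (f a ω * f b ω) :=
      fun ω => by ring
    have hsum : Integrable (fun ω => σ a ^ 2 * f a ω ^ 2 + σ b ^ 2 * f b ω ^ 2) P :=
      (hia.const_mul _).add (hib.const_mul _)
    simp_rw [hexp]
    rw [integral_sub hsum (hiab.const_mul _),
      integral_add (hia.const_mul _) (hib.const_mul _)]
    simp_rw [integral_const_mul]
    rw [hsq hma (hunit a ha), hsq hmb (hunit b hb)]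
    simp
  have hr : 1 - ∫ ω, f a ω * f b ω ∂P ≤ κH' * dist a b ^ β' := by
    have h := hcorr a ha a ha b hb a ha
    have h1 : ∫ ω, f a ω * f a ω ∂P = 1 := by
      simp_rw [← pow_two]; simpa using hsq hma (hunit a ha)
    rw [h1, dist_self, Real.zero_rpow hβ'.ne', zero_add] at h
    exact (le_abs_self _).trans h
  have hrnn : 0 ≤ κH' * dist a b ^ β' := by
    have h := hcorr a ha a ha b hb a ha
    rw [dist_self, Real.zero_rpow hβ'.ne', zero_add] at h
    exact (abs_nonneg _).trans h
  obtain ⟨ha1, ha2⟩ := hσ a ha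
  obtain ⟨hb1, hb2⟩ := hσ b hb
  have hprod : σ a * σ b ≤ σu ^ 2 := by nlinarith
  have hprod0 : 0 ≤ σ a * σ b := mul_nonneg (hσl.le.trans ha1) (hσl.le.trans hb1)
  have hdiff : (σ a - σ b) ^ 2 ≤ (κH * dist a b ^ β) ^ 2 := by
    rw [← sq_abs, abs_sub_comm]
    exact pow_le_pow_left₀ (abs_nonneg _) (hσH a ha b hb) 2
  calc (v : ℝ) = (σ a - σ b) ^ 2 + 2 * (σ a * σ b) * (1 - ∫ ω, f a ω * f b ω ∂P) := by
        rw [hvar]; ring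
    _ ≤ (κH * dist a b ^ β) ^ 2 + 2 * (σ a * σ b) * (κH' * dist a b ^ β') := by gcongr
    _ ≤ _ := by gcongr

/-- The pairs of net points linked at level `k` of a chaining argument. -/
noncomputable def chainLinks {E : Type*} [PseudoMetricSpace E] (F : ℕ → Finset E) (δ : ℕ → ℝ)
    (k : ℕ) : Finset (E × E) := by
  classical
  exact (F k ×ˢ (F k ∪ F (k + 1))).filter fun p => dist p.1 p.2 ≤ δ k

lemma mem_chainLinks {E : Type*} [PseudoMetricSpace E] {F : ℕ → Finset E} {δ : ℕ → ℝ}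
    {k : ℕ} {p : E × E} :
    p ∈ chainLinks F δ k ↔
      (p.1 ∈ F k ∧ (p.2 ∈ F k ∨ p.2 ∈ F (k + 1))) ∧ dist p.1 p.2 ≤ δ k := by
  classical
  simp only [chainLinks, Finset.mem_filter, Finset.mem_product, Finset.mem_union]

lemma card_chainLinks_le {E : Type*} [PseudoMetricSpace E] (F : ℕ → Finset E) (δ : ℕ → ℝ)
    (k : ℕ) : (chainLinks F δ k).card ≤ (F k).card * ((F k).card + (F (k + 1)).card) := by
  classical
  refine (Finset.card_filter_le _ _).trans ?_
  rw [Finset.card_product]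
  exact Nat.mul_le_mul_left _ (Finset.card_union_le _ _)

/-- Chaining along nets for a single continuous function. -/
lemma ofReal_abs_sub_le_tsum_chainLinks {E : Type*} [PseudoMetricSpace E] {T : Set E}
    {x : E → ℝ} (hx : ContinuousOn x T) {F : ℕ → Finset E} {r δ : ℕ → ℝ}
    (hFT : ∀ k, (↑(F k) : Set E) ⊆ T) (hr : ∀ k, r (k + 1) ≤ r k)
    (hr0 : Tendsto r atTop (nhds 0))
    (hF : ∀ k, ∀ t ∈ T, ∃ u ∈ F k, dist t u ≤ r k) {h : ℝ}
    (hδ : ∀ k, 2 * r k ≤ δ k) (hδ0 : h + 2 * r 0 ≤ δ 0)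
    {s t : E} (hs : s ∈ T) (ht : t ∈ T) (hst : dist s t ≤ h) :
    ENNReal.ofReal |x s - x t| ≤
      3 * ∑' k, (chainLinks F δ k).sup fun p => ENNReal.ofReal |x p.1 - x p.2| := by
  set S : ℕ → ENNReal := fun k =>
    (chainLinks F δ k).sup fun p => ENNReal.ofReal |x p.1 - x p.2| with hS
  have hlink : ∀ k, ∀ p ∈ chainLinks F δ k, edist (x p.1) (x p.2) ≤ S k := by
    intro k p hp
    rw [edist_dist, Real.dist_eq]
    exact Finset.le_sup (f := fun p : E × E => ENNReal.ofReal |x p.1 - x p.2|) hp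
  have hproj : ∀ u ∈ T, ∃ π : ℕ → E, (∀ k, π k ∈ F k ∧ dist u (π k) ≤ r k) := by
    intro u hu
    choose π hπ using fun k => hF k u hu
    exact ⟨π, hπ⟩
  have hchain : ∀ u ∈ T, ∀ π : ℕ → E, (∀ k, π k ∈ F k ∧ dist u (π k) ≤ r k) →
      edist (x (π 0)) (x u) ≤ ∑' k, S k := by
    intro u hu π hπ
    refine edist_le_tsum_of_edist_le_of_tendsto₀ S (f := fun k => x (π k)) (fun k => ?_) ?_
    · refine hlink k (π k, π (k + 1)) (mem_chainLinks.2 ⟨⟨(hπ k).1, Or.inr (hπ (k + 1)).1⟩, ?_⟩)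
      have h1 := dist_triangle_left (π k) (π (k + 1)) u
      have h2 := (hπ k).2
      have h3 := (hπ (k + 1)).2
      have := hr k
      have := hδ k
      change dist (π k) (π (k + 1)) ≤ δ k
      linarith
    · have hlim : Tendsto π atTop (nhds u) := by
        rw [tendsto_iff_dist_tendsto_zero]
        refine squeeze_zero (fun _ => dist_nonneg) (fun k => ?_) hr0
        rw [dist_comm]
        exact (hπ k).2
      exact (hx u hu).tendsto.comp (tendsto_nhdsWithin_iff.2
        ⟨hlim, Eventually.of_forall fun k => hFT k (hπ k).1⟩)
  obtain ⟨π, hπ⟩ := hproj s hs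
  obtain ⟨ρ, hρ⟩ := hproj t ht
  have hmid : edist (x (π 0)) (x (ρ 0)) ≤ ∑' k, S k := by
    refine (hlink 0 (π 0, ρ 0) (mem_chainLinks.2 ⟨⟨(hπ 0).1, Or.inl (hρ 0).1⟩, ?_⟩)).trans
      (ENNReal.le_tsum 0)
    have h1 := dist_triangle4 (π 0) s t (ρ 0)
    have h2 := (hπ 0).2
    have h3 := (hρ 0).2
    rw [dist_comm] at h2
    change dist (π 0) (ρ 0) ≤ δ 0
    linarith
  calc ENNReal.ofReal |x s - x t| = edist (x s) (x t) := by rw [edist_dist, Real.dist_eq]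
    _ ≤ edist (x s) (x (π 0)) + edist (x (π 0)) (x (ρ 0)) + edist (x (ρ 0)) (x t) :=
        edist_triangle4 _ _ _ _
    _ ≤ ∑' k, S k + ∑' k, S k + ∑' k, S k := by
        gcongr
        · rw [edist_comm]; exact hchain s hs π hπ
        · exact hchain t ht ρ hρ
    _ = 3 * ∑' k, S k := by ring

/-- The logarithmic size of the links at level `k` of the dyadic chaining started at scale
`1 / N`. -/
lemma chain_card_le_exp {d C N k n₀ n₁ : ℕ} (hC : 1 ≤ C) (hN : 2 ≤ N)
    (h₀ : n₀ ≤ (C * (N * 2 ^ k)) ^ d) (h₁ : n₁ ≤ (C * (N * 2 ^ (k + 1))) ^ d) :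
    ((n₀ * (n₀ + n₁) : ℕ) : ℝ) ≤
      Real.exp (1 + 2 * d * (Real.log C + Real.log N + (k + 1))) := by
  have hC0 : (0 : ℝ) < C := by exact_mod_cast hC
  have hN0 : (0 : ℝ) < N := by exact_mod_cast (by omega : 0 < N)
  have hle : (C * (N * 2 ^ k)) ^ d ≤ (C * (N * 2 ^ (k + 1))) ^ d := by
    gcongr <;> omega
  have h2 : (2 : ℝ) ^ (k + 1) ≤ Real.exp (k + 1) := by
    have h : (2 : ℝ) ≤ Real.exp 1 := by linarith [Real.exp_one_gt_d9]
    calc (2 : ℝ) ^ (k + 1) ≤ Real.exp 1 ^ (k + 1) := by gcongr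
      _ = Real.exp (k + 1) := by rw [← Real.exp_nat_mul]; push_cast; ring_nf
  have hM : (((C * (N * 2 ^ (k + 1))) ^ d : ℕ) : ℝ) ≤
      Real.exp (d * (Real.log C + Real.log N + (k + 1))) := by
    rw [Real.exp_nat_mul, Real.exp_add, Real.exp_add, Real.exp_log hC0, Real.exp_log hN0]
    push_cast
    rw [mul_assoc]
    gcongr
  have hnat : n₀ * (n₀ + n₁) ≤ 2 * (C * (N * 2 ^ (k + 1))) ^ d * (C * (N * 2 ^ (k + 1))) ^ d := by
    rw [mul_comm 2, mul_assoc]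
    exact Nat.mul_le_mul (h₀.trans hle) (by omega)
  calc ((n₀ * (n₀ + n₁) : ℕ) : ℝ)
      ≤ 2 * (((C * (N * 2 ^ (k + 1))) ^ d : ℕ) : ℝ) * (((C * (N * 2 ^ (k + 1))) ^ d : ℕ) : ℝ) := by
        exact_mod_cast hnat
    _ ≤ Real.exp 1 * Real.exp (d * (Real.log C + Real.log N + (k + 1))) *
          Real.exp (d * (Real.log C + Real.log N + (k + 1))) := by
        gcongr
        linarith [Real.exp_one_gt_d9]
    _ = _ := by rw [← Real.exp_add, ← Real.exp_add]; ring_nf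

/-- A uniform bound for the expected modulus of continuity, at scale `h / N`, of a continuous
Gaussian field on a bounded set whose increments have a Hölder standard deviation. -/
lemma exists_integral_iSup_increment_le {Ω : Type*} [MeasurableSpace Ω] (P : Measure Ω)
    [IsProbabilityMeasure P] {d : ℕ} {T : Set (EuclideanSpace ℝ (Fin d))}
    (hT : Bornology.IsBounded T) {α h K A : ℝ} (hα : 0 < α) (hA : 0 < A) (hh : 0 ≤ h)
    (hK : h + 2 * √d ≤ K) :
    ∃ κ ≥ (0 : ℝ), ∀ X : EuclideanSpace ℝ (Fin d) → Ω → ℝ, (∀ u, Measurable (X u)) →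
      (∀ᵐ ω ∂P, ContinuousOn (fun u => X u ω) T) →
      (∀ x : ℝ, 0 < x → x ≤ 1 → ∀ a ∈ T, ∀ b ∈ T, dist a b ≤ K * x → ∃ v : NNReal,
        P.map (fun ω => X a ω - X b ω) = gaussianReal 0 v ∧ (v : ℝ) ≤ (A * x ^ α) ^ 2) →
      ∀ N : ℕ, 2 ≤ N →
        (∫ ω, (⨆ p : {p : (EuclideanSpace ℝ (Fin d)) × (EuclideanSpace ℝ (Fin d)) //
            p.1 ∈ T ∧ p.2 ∈ T ∧ dist p.1 p.2 ≤ h / N}, |X p.1.1 ω - X p.1.2 ω|) ∂P) ≤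
          κ * (N : ℝ) ^ (-α) * Real.log N := by
  obtain ⟨C, hC, hnet⟩ := exists_grid_net hT
  have hlogC : 0 ≤ Real.log C := Real.log_natCast_nonneg C
  set q : ℝ := 2 ^ (-α) with hq
  have hq0 : 0 < q := by positivity
  have hq1 : q < 1 := Real.rpow_lt_one_of_one_lt_of_neg (by norm_num) (by linarith)
  set D : ℝ := 10 + 2 * d * (2 * Real.log C + 3) with hD
  have hD0 : 0 ≤ D := by positivity
  have hsum : Summable fun k : ℕ => ((k : ℝ) + 1) * q ^ k := by
    have h1 := summable_pow_mul_geometric_of_norm_lt_one 1 (r := q)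
      (by rwa [Real.norm_of_nonneg hq0.le])
    have h0 := summable_geometric_of_lt_one hq0.le hq1
    refine (h1.add h0).congr fun k => ?_
    ring
  refine ⟨3 * (A * D * ∑' k : ℕ, ((k : ℝ) + 1) * q ^ k), ?_, ?_⟩
  · have : 0 ≤ ∑' k : ℕ, ((k : ℝ) + 1) * q ^ k := tsum_nonneg fun k => by positivity
    positivity
  intro X hX hcont hlaw N hN
  have hN0 : (0 : ℝ) < N := by exact_mod_cast (by omega : 0 < N)
  have hlogN : 1 / 2 ≤ Real.log N := by
    have h2 : Real.log 2 ≤ Real.log N := Real.log_le_log (by norm_num) (by exact_mod_cast hN)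
    linarith [Real.log_two_gt_d9]
  have hm : ∀ k : ℕ, 1 ≤ N * 2 ^ k := fun k => Nat.mul_pos (by omega) (by positivity)
  choose F hFT hFcard hF using fun k : ℕ => hnet (N * 2 ^ k) (hm k)
  set x : ℕ → ℝ := fun k => 1 / ((N * 2 ^ k : ℕ) : ℝ) with hx
  have hx0 : ∀ k, 0 < x k := fun k => one_div_pos.2 (by exact_mod_cast hm k)
  have hx1 : ∀ k, x k ≤ 1 := fun k => by
    rw [hx, div_le_one (by exact_mod_cast hm k)]; exact_mod_cast hm k
  have hxs : ∀ k, x (k + 1) = x k / 2 := fun k => by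
    simp only [hx]; push_cast; rw [pow_succ]; field_simp
  have hx_eq : ∀ k, x k = x 0 * (1 / 2) ^ k := fun k => by
    simp only [hx]; push_cast; rw [one_div_pow]; field_simp
  have hxlim : Tendsto x atTop (nhds 0) := by
    rw [funext hx_eq]
    simpa using (tendsto_pow_atTop_nhds_zero_of_lt_one (r := (1 / 2 : ℝ)) (by norm_num)
      (by norm_num)).const_mul (x 0)
  have hxα : ∀ k, x k ^ α = (N : ℝ) ^ (-α) * q ^ k := fun k => by
    simp only [hx]
    push_cast
    rw [one_div, Real.inv_rpow (by positivity), Real.mul_rpow hN0.le (by positivity), mul_inv,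
      ← Real.rpow_neg hN0.le, hq, ← Real.rpow_natCast, ← Real.rpow_natCast,
      ← Real.rpow_mul (by norm_num), ← Real.rpow_mul (by norm_num),
      ← Real.rpow_neg (by norm_num)]
    ring_nf
  set δ : ℕ → ℝ := fun k => K * x k with hδ
  set S : ℕ → Ω → ENNReal := fun k ω =>
    (chainLinks F δ k).sup fun p => ENNReal.ofReal |X p.1 ω - X p.2 ω| with hS
  have hSmeas : ∀ k, Measurable (S k) := fun k => by
    simp only [hS, Finset.sup_eq_iSup]
    refine Measurable.biSup _ (Finset.countable_toSet _) fun p _ => ?_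
    have := hX p.1
    have := hX p.2
    fun_prop
  have hmemT : ∀ k, ∀ p ∈ chainLinks F δ k, p.1 ∈ T ∧ p.2 ∈ T ∧ dist p.1 p.2 ≤ K * x k := by
    intro k p hp
    obtain ⟨⟨h1, h2⟩, h3⟩ := mem_chainLinks.1 hp
    exact ⟨hFT k h1, h2.elim (fun h => hFT k h) (fun h => hFT (k + 1) h), h3⟩
  have hlevel : ∀ k, ∫⁻ ω, S k ω ∂P ≤
      ENNReal.ofReal (A * D * (N : ℝ) ^ (-α) * Real.log N * (((k : ℝ) + 1) * q ^ k)) := by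
    intro k
    have hL : (0 : ℝ) ≤ 1 + 2 * d * (Real.log C + Real.log N + (k + 1)) := by positivity
    refine (lintegral_finset_sup_gaussian_le (chainLinks F δ k)
      (fun p ω => X p.1 ω - X p.2 ω) (fun p _ => (hX p.1).sub (hX p.2))
      (s := A * x k ^ α) (mul_pos hA (Real.rpow_pos_of_pos (hx0 k) α)) hL (fun p hp => ?_)
      ?_).trans (ENNReal.ofReal_le_ofReal ?_)
    · obtain ⟨h1, h2, h3⟩ := hmemT k p hp
      exact hlaw (x k) (hx0 k) (hx1 k) _ h1 _ h2 h3
    · exact (Nat.cast_le.2 (card_chainLinks_le F δ k)).trans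
        (chain_card_le_exp hC hN (hFcard k) (hFcard (k + 1)))
    · have hlin : 1 + 2 * d * (Real.log C + Real.log N + (k + 1)) + 4 ≤
          D * (Real.log N * ((k : ℝ) + 1)) := by
        have hk : (0 : ℝ) ≤ k := Nat.cast_nonneg k
        have h1 : ((k : ℝ) + 1) / 2 ≤ Real.log N * ((k : ℝ) + 1) := by nlinarith
        have h2 : Real.log N ≤ Real.log N * ((k : ℝ) + 1) := by nlinarith
        have h3 : Real.log C + Real.log N + (k + 1) ≤
            (2 * Real.log C + 3) * (Real.log N * ((k : ℝ) + 1)) := by nlinarith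
        have h4 : (2 * d : ℝ) * (Real.log C + Real.log N + (k + 1)) ≤
            (2 * d) * ((2 * Real.log C + 3) * (Real.log N * ((k : ℝ) + 1))) := by gcongr
        rw [hD]
        nlinarith
      rw [hxα]
      calc _ ≤ A * ((N : ℝ) ^ (-α) * q ^ k) * (D * (Real.log N * ((k : ℝ) + 1))) := by gcongr
        _ = _ := by ring
  have hpt : ∀ᵐ ω ∂P, ‖⨆ p : {p : (EuclideanSpace ℝ (Fin d)) × (EuclideanSpace ℝ (Fin d)) //
      p.1 ∈ T ∧ p.2 ∈ T ∧ dist p.1 p.2 ≤ h / N}, |X p.1.1 ω - X p.1.2 ω|‖ₑ ≤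
        3 * ∑' k, S k ω := by
    filter_upwards [hcont] with ω hω
    have hchain : ∀ p : {p : (EuclideanSpace ℝ (Fin d)) × (EuclideanSpace ℝ (Fin d)) //
        p.1 ∈ T ∧ p.2 ∈ T ∧ dist p.1 p.2 ≤ h / N},
        ENNReal.ofReal |X p.1.1 ω - X p.1.2 ω| ≤ 3 * ∑' k, S k ω := fun p => by
      refine ofReal_abs_sub_le_tsum_chainLinks hω (r := fun k => √d * x k) hFT (fun k => ?_) ?_
        (fun k t ht => ?_) (h := h / N) (fun k => ?_) ?_ p.2.1 p.2.2.1 p.2.2.2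
      · have := hxs k
        have := hx0 k
        gcongr
        linarith
      · simpa using hxlim.const_mul (√d)
      · obtain ⟨u, hu, hd⟩ := hF k t ht
        exact ⟨u, hu, hd.trans_eq (by rw [hx, mul_one_div])⟩
      · rw [hδ, ← mul_assoc]
        exact mul_le_mul_of_nonneg_right (by linarith) (hx0 k).le
      · have h0 : h / N = h * x 0 := by simp [hx, div_eq_mul_inv]
        rw [h0, hδ, ← mul_assoc, ← add_mul]
        exact mul_le_mul_of_nonneg_right hK (hx0 0).le
    rw [Real.enorm_of_nonneg (Real.iSup_nonneg fun _ => abs_nonneg _)]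
    by_cases htop : 3 * ∑' k, S k ω = ⊤
    · rw [htop]; exact le_top
    · refine ENNReal.ofReal_le_of_le_toReal (Real.iSup_le (fun p => ?_) ENNReal.toReal_nonneg)
      exact (ENNReal.ofReal_le_iff_le_toReal htop).1 (hchain p)
  have hfinal : ‖∫ ω, (⨆ p : {p : (EuclideanSpace ℝ (Fin d)) × (EuclideanSpace ℝ (Fin d)) //
      p.1 ∈ T ∧ p.2 ∈ T ∧ dist p.1 p.2 ≤ h / N}, |X p.1.1 ω - X p.1.2 ω|) ∂P‖ₑ ≤
      ENNReal.ofReal (3 * (A * D * ∑' k : ℕ, ((k : ℝ) + 1) * q ^ k) * (N : ℝ) ^ (-α) *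
        Real.log N) := by
    calc _ ≤ _ := enorm_integral_le_lintegral_enorm _
      _ ≤ ∫⁻ ω, 3 * ∑' k, S k ω ∂P := lintegral_mono_ae hpt
      _ = 3 * ∑' k, ∫⁻ ω, S k ω ∂P := by
          rw [lintegral_const_mul _ (Measurable.tsum hSmeas),
            lintegral_tsum fun k => (hSmeas k).aemeasurable]
      _ ≤ 3 * ∑' k : ℕ, ENNReal.ofReal
            (A * D * (N : ℝ) ^ (-α) * Real.log N * (((k : ℝ) + 1) * q ^ k)) := by
          gcongr with k
          exact hlevel k
      _ = _ := by
          rw [← ENNReal.ofReal_tsum_of_nonneg (fun k => by positivity) (hsum.mul_left _),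
            tsum_mul_left, ← ENNReal.ofReal_ofNat 3, ← ENNReal.ofReal_mul (by norm_num)]
          congr 1
          ring
  have hnn : 0 ≤ 3 * (A * D * ∑' k : ℕ, ((k : ℝ) + 1) * q ^ k) * (N : ℝ) ^ (-α) *
        Real.log N := by
    have : 0 ≤ ∑' k : ℕ, ((k : ℝ) + 1) * q ^ k := tsum_nonneg fun k => by positivity
    positivity
  rw [Real.enorm_eq_ofReal_abs, ENNReal.ofReal_le_ofReal_iff hnn] at hfinal
  exact (le_abs_self _).trans hfinal

/-- **Expected supremum of the increment field near the diagonal (Lemma 3).**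
For `ξ(s,t) = σ(s)f(s) − σ(t)f(t)` and `β* = min(β, β')`, there is a constant
`κ_ξ > 0`, uniform over all `σ` in the class C1 and all centered unit-variance
a.s. continuous Gaussian fields `f` satisfying the correlation Hölder condition C4,
such that for all `N ≥ 2`,
`E[ sup_{s,t ∈ T, |s−t| ≤ κ_m/N} |ξ(s,t)| ] < κ_ξ · N^{−β*/2} · log N`. -/
theorem expected_sup_increment_bound
    {Ω : Type*} [MeasurableSpace Ω] (P : Measure Ω) [IsProbabilityMeasure P]
    {d : ℕ} (T : Set (EuclideanSpace ℝ (Fin d)))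
    (hT : IsCompact T) (hTne : T.Nonempty)
    (μl μu σl σu β κH β' κH' κm : ℝ)
    (hμ : μl ≤ μu) (hσl : 0 < σl) (hσ : σl ≤ σu) (hβ : 0 < β) (hκH : 0 < κH)
    (hβ' : 0 < β') (hκH' : 0 < κH') (hκm : 0 < κm) :
    ∃ κξ > (0 : ℝ), ∀ f : EuclideanSpace ℝ (Fin d) → Ω → ℝ,
      (∀ u, Measurable (f u)) →
      (∀ s : Finset (EuclideanSpace ℝ (Fin d)), ↑s ⊆ T →
        ∀ c : EuclideanSpace ℝ (Fin d) → ℝ, ∃ v : NNReal,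
          Measure.map (fun ω => ∑ u ∈ s, c u * f u ω) P = gaussianReal 0 v) →
      (∀ u ∈ T, Measure.map (f u) P = gaussianReal 0 1) →
      (∀ᵐ ω ∂P, ContinuousOn (fun u => f u ω) T) →
      (∀ s ∈ T, ∀ u ∈ T, ∀ s' ∈ T, ∀ u' ∈ T,
        |(∫ ω, f u ω * f s ω ∂P) - (∫ ω, f u' ω * f s' ω ∂P)| ≤
          κH' * (dist u u' ^ β' + dist s s' ^ β')) →
      ∀ σ : EuclideanSpace ℝ (Fin d) → ℝ,
        (∀ u ∈ T, σ u ∈ Set.Icc σl σu) →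
        (∀ s ∈ T, ∀ u ∈ T, |σ u - σ s| ≤ κH * dist s u ^ β) →
        ∀ N : ℕ, 2 ≤ N →
          (∫ ω, (⨆ p : {p : (EuclideanSpace ℝ (Fin d)) × (EuclideanSpace ℝ (Fin d)) //
              p.1 ∈ T ∧ p.2 ∈ T ∧ dist p.1 p.2 ≤ κm / N},
            |σ p.1.1 * f p.1.1 ω - σ p.1.2 * f p.1.2 ω|) ∂P) <
            κξ * (N : ℝ) ^ (-(min β β' / 2)) * Real.log N := by
  obtain ⟨K, hK1, hKm⟩ : ∃ K : ℝ, 1 ≤ K ∧ κm + 2 * √d ≤ K :=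
    ⟨max 1 (κm + 2 * √d), le_max_left _ _, le_max_right _ _⟩
  have hσu : 0 < σu := hσl.trans_le hσ
  set V : ℝ := (κH * K ^ β) ^ 2 + 2 * σu ^ 2 * (κH' * K ^ β') with hV
  have hV0 : 0 < V := by positivity
  have hα : 0 < min β β' / 2 := half_pos (lt_min hβ hβ')
  obtain ⟨κ, hκ, hbound⟩ := exists_integral_iSup_increment_le P hT.isBounded hα
    (Real.sqrt_pos.2 hV0) hκm.le hKm
  refine ⟨κ + 1, by linarith, fun f hmeas hgauss hunit hcont hcorr σ hσI hσH N hN => ?_⟩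
  have hσcont : ContinuousOn σ T := by
    intro u hu
    rw [ContinuousWithinAt, tendsto_iff_dist_tendsto_zero]
    have hlim : Tendsto (fun w => κH * dist u w ^ β) (nhdsWithin u T) (nhds 0) := by
      have hc : Continuous fun w => κH * dist u w ^ β :=
        continuous_const.mul ((continuous_const.dist continuous_id).rpow_const
          fun _ => Or.inr hβ.le)
      simpa [Real.zero_rpow hβ.ne'] using (hc.tendsto u).mono_left nhdsWithin_le_nhds
    refine squeeze_zero' (Eventually.of_forall fun _ => dist_nonneg) ?_ hlim
    filter_upwards [self_mem_nhdsWithin] with w hw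
    exact hσH u hu w hw
  have hle := hbound (fun u ω => σ u * f u ω) (fun u => (hmeas u).const_mul _)
    (hcont.mono fun ω hω => hσcont.mul hω) ?_ N hN
  · refine hle.trans_lt ?_
    have hN1 : (1 : ℝ) < N := by exact_mod_cast hN
    have hlog : 0 < Real.log N := Real.log_pos hN1
    have hpow : 0 < (N : ℝ) ^ (-(min β β' / 2)) := Real.rpow_pos_of_pos (by linarith) _
    gcongr
    linarith
  · intro x hx0 hx1 a ha b hb hab
    obtain ⟨v, hv, hvle⟩ := exists_gaussian_increment_law hσl hβ' hmeas hgauss hunit hcorr hσI hσH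
      ha hb
    refine ⟨v, hv, hvle.trans ?_⟩
    have hK0 : 0 < K := by linarith
    have hxm : (x ^ (min β β' / 2)) ^ 2 = x ^ min β β' := by
      rw [← Real.rpow_natCast, ← Real.rpow_mul hx0.le]; norm_num
    have h1 : dist a b ^ β' ≤ K ^ β' * x ^ min β β' := by
      calc dist a b ^ β' ≤ (K * x) ^ β' := by gcongr
        _ = K ^ β' * x ^ β' := Real.mul_rpow hK0.le hx0.le
        _ ≤ _ := by
          gcongr ?_ * ?_
          exact Real.rpow_le_rpow_of_exponent_ge hx0 hx1 (min_le_right _ _)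
    have h2 : dist a b ^ β ≤ K ^ β * x ^ (min β β' / 2) := by
      calc dist a b ^ β ≤ (K * x) ^ β := by gcongr
        _ = K ^ β * x ^ β := Real.mul_rpow hK0.le hx0.le
        _ ≤ _ := by
          gcongr ?_ * ?_
          exact Real.rpow_le_rpow_of_exponent_ge hx0 hx1
            (by linarith [min_le_left β β', lt_min hβ hβ'])
    calc (κH * dist a b ^ β) ^ 2 + 2 * σu ^ 2 * (κH' * dist a b ^ β')
        ≤ (κH * (K ^ β * x ^ (min β β' / 2))) ^ 2 +
            2 * σu ^ 2 * (κH' * (K ^ β' * x ^ min β β')) := by gcongr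
      _ = (√V * x ^ (min β β' / 2)) ^ 2 := by
          rw [mul_pow √V, Real.sq_sqrt hV0.le, hxm, ← mul_assoc, mul_pow, hxm, hV]
          ring
end

section
/- In the setting of the previous statement, let U = {(s,t) ∈ T × T : |s−t| ≤ κ_m/N} equipped with the pseudo-metric d_ξ, and let N(ε) be the smallest number of d_ξ-balls of radius ε needed to cover U. Then there exist constants κ̃ and ε̃, uniform over all σ in the class C1 and all fields f satisfying C3–C4, such that: (i) for every ε ∈ (0, 1), log N(ε) ≤ log κ̃ + (4d/β*) log(1/ε); and (ii) the diameter of U under d_ξ satisfies diam_{d_ξ}(U) ≤ κ̃ · N^{−β*/2}. -/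
open MeasureTheory ProbabilityTheory Filter Set

/-- The near-diagonal set `U = {(s,t) ∈ T × T : |s−t| ≤ κ_m/N}`. -/
def nearDiag (d : ℕ) (T : Set (EuclideanSpace ℝ (Fin d))) (κm : ℝ) (N : ℕ) :
    Set ((EuclideanSpace ℝ (Fin d)) × (EuclideanSpace ℝ (Fin d))) :=
  {p | p.1 ∈ T ∧ p.2 ∈ T ∧ dist p.1 p.2 ≤ κm / N}

/-- The canonical pseudo-metric of the increment field `ξ(s,t) = σ(s)f(s) − σ(t)f(t)`:
`d_ξ((s,t),(s',t')) = (E[(ξ(s,t) − ξ(s',t'))²])^{1/2}`. -/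
noncomputable def xiDist {Ω : Type*} [MeasurableSpace Ω] (P : Measure Ω)
    {E : Type*} (f : E → Ω → ℝ) (σ : E → ℝ) (p q : E × E) : ℝ :=
  Real.sqrt (∫ ω, ((σ p.1 * f p.1 ω - σ p.2 * f p.2 ω) -
    (σ q.1 * f q.1 ω - σ q.2 * f q.2 ω)) ^ 2 ∂P)

/-- `N(ε)`: the smallest number of closed `D`-balls of radius `ε` with centers in `S`
needed to cover `S`. -/
noncomputable def coverNumOn {α : Type*} (S : Set α) (D : α → α → ℝ) (ε : ℝ) : ℕ :=
  sInf {n : ℕ | ∃ s : Finset α, s.card = n ∧ ↑s ⊆ S ∧ ∀ x ∈ S, ∃ c ∈ s, D x c ≤ ε}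

/-- A bounded subset of `ℝ^d × ℝ^d` is covered, coordinatewise and with centers in the set, by
`O(δ^{-2d})` balls of radius `δ`. -/
lemma exists_cover_card_le {d : ℕ} {T : Set (EuclideanSpace ℝ (Fin d))}
    (hT : Bornology.IsBounded T) :
    ∃ K > (0 : ℝ), ∀ U ⊆ T ×ˢ T, ∀ δ : ℝ, 0 < δ → δ ≤ 1 →
      ∃ s : Finset (EuclideanSpace ℝ (Fin d) × EuclideanSpace ℝ (Fin d)),
        ↑s ⊆ U ∧ (s.card : ℝ) ≤ K * (δ⁻¹) ^ (2 * d) ∧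
          ∀ x ∈ U, ∃ c ∈ s, dist x.1 c.1 ≤ δ ∧ dist x.2 c.2 ≤ δ := by
  classical
  obtain ⟨M, hM0, hM⟩ := hT.exists_pos_norm_le
  refine ⟨(2 * (M * (d + 1)) + 3) ^ (2 * d), by positivity, fun U hU δ hδ hδ1 => ?_⟩
  set h : ℝ := δ / (d + 1) with hh
  have hhpos : 0 < h := by positivity
  set m : ℤ := ⌈M / h⌉ with hm
  have hm0 : 0 ≤ m := Int.ceil_nonneg (by positivity)
  let cell : EuclideanSpace ℝ (Fin d) → Fin d → ℤ := fun x i => ⌊x i / h⌋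
  let A : Finset (Fin d → ℤ) := Fintype.piFinset fun _ => Finset.Icc (-m) m
  have cell_mem : ∀ x ∈ T, cell x ∈ A := by
    intro x hx
    refine Fintype.mem_piFinset.2 fun i => Finset.mem_Icc.2 ?_
    have hxi : |x i| ≤ M := (PiLp.norm_apply_le x i).trans (hM x hx)
    have hle : M / h ≤ m := Int.le_ceil _
    have h1 : |x i / h| ≤ m := by
      rw [abs_div, abs_of_pos hhpos]
      exact (div_le_div_of_nonneg_right hxi hhpos.le).trans hle
    rw [abs_le] at h1
    refine ⟨Int.le_floor.2 (by push_cast; exact h1.1), ?_⟩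
    have hfl := (Int.floor_le (x i / h)).trans h1.2
    exact Int.cast_le.1 hfl
  have cell_dist : ∀ x y, cell x = cell y → dist x y ≤ δ := by
    intro x y hxy
    have hi : ∀ i, dist (x i) (y i) ≤ h := by
      intro i
      have := Int.abs_sub_lt_one_of_floor_eq_floor (congrFun hxy i)
      rw [← sub_div, abs_div, abs_of_pos hhpos, div_lt_one hhpos] at this
      exact this.le
    rw [EuclideanSpace.dist_eq]
    refine Real.sqrt_le_iff.2 ⟨hδ.le, ?_⟩
    calc ∑ i, dist (x i) (y i) ^ 2 ≤ ∑ _i : Fin d, h ^ 2 :=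
          Finset.sum_le_sum fun i _ => pow_le_pow_left₀ dist_nonneg (hi i) 2
      _ = d * h ^ 2 := by simp
      _ ≤ ((d + 1) * h) ^ 2 := by
          have : (0 : ℝ) ≤ d := Nat.cast_nonneg d
          nlinarith [sq_nonneg h, mul_nonneg this (sq_nonneg h),
            mul_nonneg (mul_nonneg this this) (sq_nonneg h)]
      _ = δ ^ 2 := by rw [hh]; field_simp
  have card_A : (A.card : ℝ) ≤ ((2 * (M * (d + 1)) + 3) * δ⁻¹) ^ d := by
    have hcard : A.card = (2 * m + 1).toNat ^ d := by
      simp only [A, Fintype.card_piFinset, Int.card_Icc, Finset.prod_const, Finset.card_univ,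
        Fintype.card_fin]
      congr 2
      ring
    rw [hcard]
    push_cast
    refine pow_le_pow_left₀ (by positivity) ?_ d
    have hcast : (((2 * m + 1).toNat : ℕ) : ℝ) = 2 * m + 1 := by
      have : (((2 * m + 1).toNat : ℕ) : ℤ) = 2 * m + 1 := Int.toNat_of_nonneg (by omega)
      exact_mod_cast this
    have hlt : (m : ℝ) < M / h + 1 := Int.ceil_lt_add_one _
    have hMh : M / h = M * (d + 1) * δ⁻¹ := by rw [hh]; field_simp
    have hδinv : 1 ≤ δ⁻¹ := (one_le_inv₀ hδ).2 hδ1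
    rw [hcast]
    rw [hMh] at hlt
    linarith
  let g : EuclideanSpace ℝ (Fin d) × EuclideanSpace ℝ (Fin d) → (Fin d → ℤ) × (Fin d → ℤ) :=
    fun p => (cell p.1, cell p.2)
  have himg : g '' U ⊆ ↑(A ×ˢ A) := by
    rintro _ ⟨p, hp, rfl⟩
    exact Finset.mem_product.2 ⟨cell_mem _ (hU hp).1, cell_mem _ (hU hp).2⟩
  have hfin : (g '' U).Finite := (A ×ˢ A).finite_toSet.subset himg
  obtain ⟨s, hsU, hs_inj, hs_img⟩ :
      ∃ s : Finset (EuclideanSpace ℝ (Fin d) × EuclideanSpace ℝ (Fin d)),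
        ↑s ⊆ U ∧ InjOn g s ∧ g '' s = g '' U := by
    obtain ⟨s, hsU, hbij⟩ := (surjOn_image g U).exists_bijOn_subset
    have hsf : s.Finite := hbij.finite_iff_finite.2 hfin
    exact ⟨hsf.toFinset, by simpa using hsU, by simpa using hbij.injOn,
      by simpa using hbij.image_eq⟩
  refine ⟨s, hsU, ?_, ?_⟩
  · have hcard : s.card ≤ (A ×ˢ A).card := by
      refine Finset.card_le_card_of_injOn g (fun p hp => ?_) hs_inj
      exact himg ⟨p, hsU hp, rfl⟩
    calc (s.card : ℝ) ≤ (A.card : ℝ) * A.card := by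
          rw [Finset.card_product] at hcard
          exact_mod_cast hcard
      _ ≤ ((2 * (M * (d + 1)) + 3) * δ⁻¹) ^ d * ((2 * (M * (d + 1)) + 3) * δ⁻¹) ^ d := by gcongr
      _ = (2 * (M * (d + 1)) + 3) ^ (2 * d) * (δ⁻¹) ^ (2 * d) := by
          rw [← pow_add, ← two_mul, mul_pow]
  · intro x hx
    have hgx : g x ∈ g '' (s : Set _) := hs_img ▸ ⟨x, hx, rfl⟩
    obtain ⟨c, hc, hgc⟩ := hgx
    exact ⟨c, hc, cell_dist _ _ (congrArg Prod.fst hgc).symm,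
      cell_dist _ _ (congrArg Prod.snd hgc).symm⟩

lemma memLp_two_of_map_eq_gaussianReal {Ω : Type*} [MeasurableSpace Ω] {P : Measure Ω}
    {X : Ω → ℝ} (hX : Measurable X) {v : NNReal} (h : Measure.map X P = gaussianReal 0 v) :
    MemLp X 2 P := by
  have hid : MemLp id 2 (Measure.map X P) := h ▸ memLp_id_gaussianReal 2
  exact (memLp_map_measure_iff aestronglyMeasurable_id hX.aemeasurable).1 hid

lemma integral_sq_of_map_eq_gaussianReal {Ω : Type*} [MeasurableSpace Ω] {P : Measure Ω}
    {X : Ω → ℝ} (hX : Measurable X) {v : NNReal} (h : Measure.map X P = gaussianReal 0 v) :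
    ∫ ω, X ω ^ 2 ∂P = v := by
  have h1 : ∫ ω, X ω ^ 2 ∂P = ∫ x, x ^ 2 ∂(Measure.map X P) :=
    (integral_map (f := fun x : ℝ => x ^ 2) hX.aemeasurable (by fun_prop)).symm
  rw [h1, h, ← variance_id_gaussianReal (μ := 0) (v := v),
    variance_of_integral_eq_zero aemeasurable_id (by simp)]
  simp

lemma integral_add_sq_le {Ω : Type*} [MeasurableSpace Ω] {P : Measure Ω}
    {X Y : Ω → ℝ} (hX : MemLp X 2 P) (hY : MemLp Y 2 P) :
    ∫ ω, (X ω + Y ω) ^ 2 ∂P ≤ 2 * (∫ ω, X ω ^ 2 ∂P) + 2 * ∫ ω, Y ω ^ 2 ∂P := by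
  rw [← integral_const_mul, ← integral_const_mul,
    ← integral_add (hX.integrable_sq.const_mul 2) (hY.integrable_sq.const_mul 2)]
  refine integral_mono (hX.add hY).integrable_sq
    ((hX.integrable_sq.const_mul 2).add (hY.integrable_sq.const_mul 2)) fun ω => ?_
  simp only
  nlinarith [sq_nonneg (X ω - Y ω)]

lemma rpow_le_mul_rpow {x D a b : ℝ} (hx : 0 ≤ x) (hxD : x ≤ D) (ha : 0 < a) (hab : a ≤ b) :
    x ^ b ≤ D ^ (b - a) * x ^ a := by
  rcases hx.eq_or_lt with rfl | hx
  · simp [Real.zero_rpow ha.ne', Real.zero_rpow (ha.trans_le hab).ne']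
  · calc x ^ b = x ^ (b - a) * x ^ a := by rw [← Real.rpow_add hx]; ring_nf
      _ ≤ _ := by
        gcongr

/-- The second moment of an increment of `σ f` is bounded by the Hölder moduli of `σ` and of the
correlation of `f`. -/
lemma integral_sq_increment_le {Ω : Type*} [MeasurableSpace Ω] {P : Measure Ω}
    {E : Type*} [PseudoMetricSpace E] {f : E → Ω → ℝ} {σ : E → ℝ} {s t : E}
    {σu β κH β' κH' : ℝ} (hβ' : 0 < β')
    (hs : MemLp (f s) 2 P) (ht : MemLp (f t) 2 P)
    (hs1 : ∫ ω, f s ω ^ 2 ∂P = 1) (ht1 : ∫ ω, f t ω ^ 2 ∂P = 1)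
    (hr : |(∫ ω, f s ω * f s ω ∂P) - ∫ ω, f s ω * f t ω ∂P| ≤
      κH' * (dist s s ^ β' + dist s t ^ β'))
    (hσ0 : 0 ≤ σ t) (hσu : σ t ≤ σu) (hσ : |σ s - σ t| ≤ κH * dist s t ^ β) :
    ∫ ω, (σ s * f s ω - σ t * f t ω) ^ 2 ∂P ≤
      2 * κH ^ 2 * dist s t ^ (2 * β) + 4 * σu ^ 2 * κH' * dist s t ^ β' := by
  have hdiff : ∫ ω, (f s ω - f t ω) ^ 2 ∂P ≤ 2 * κH' * dist s t ^ β' := by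
    have hint : Integrable (fun ω => f s ω * f t ω) P := hs.integrable_mul ht
    have hexp : ∫ ω, (f s ω - f t ω) ^ 2 ∂P = 2 - 2 * ∫ ω, f s ω * f t ω ∂P := by
      have hpt : ∀ ω, (f s ω - f t ω) ^ 2 = f s ω ^ 2 + f t ω ^ 2 - 2 * (f s ω * f t ω) :=
        fun ω => by ring
      simp_rw [hpt]
      have hadd : Integrable (fun ω => f s ω ^ 2 + f t ω ^ 2) P :=
        hs.integrable_sq.add ht.integrable_sq
      rw [integral_sub hadd (hint.const_mul 2),
        integral_add hs.integrable_sq ht.integrable_sq, integral_const_mul, hs1, ht1]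
      ring
    simp_rw [← pow_two] at hr
    rw [hs1, dist_self, Real.zero_rpow hβ'.ne', zero_add] at hr
    rw [hexp]
    linarith [(abs_le.1 hr).2]
  have hsplit : ∀ ω, σ s * f s ω - σ t * f t ω =
      (σ s - σ t) * f s ω + σ t * (f s ω - f t ω) := fun ω => by ring
  simp_rw [hsplit]
  refine (integral_add_sq_le (hs.const_mul (σ s - σ t)) ((hs.sub ht).const_mul (σ t))).trans ?_
  simp only [Pi.sub_apply, mul_pow]
  rw [integral_const_mul, integral_const_mul, hs1]
  have h1 : (σ s - σ t) ^ 2 ≤ κH ^ 2 * dist s t ^ (2 * β) := by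
    rw [← sq_abs, mul_comm 2 β, Real.rpow_mul dist_nonneg, Real.rpow_two, ← mul_pow]
    exact pow_le_pow_left₀ (abs_nonneg _) hσ 2
  have h2 : σ t ^ 2 * ∫ ω, (f s ω - f t ω) ^ 2 ∂P ≤ σu ^ 2 * (2 * κH' * dist s t ^ β') :=
    mul_le_mul (pow_le_pow_left₀ hσ0 hσu 2) hdiff (integral_nonneg fun _ => sq_nonneg _)
      (sq_nonneg _)
  linarith

/-- If the increments of `σ f` over `T` have second moment at most `A |s - t| ^ b`, then so do,
up to a factor, the `d_ξ`-distances, compared either pointwise or through the diagonal. -/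
lemma xiDist_le_sqrt {Ω : Type*} [MeasurableSpace Ω] {P : Measure Ω} {E : Type*}
    [PseudoMetricSpace E] {f : E → Ω → ℝ} {σ : E → ℝ} {T : Set E} {A b : ℝ} (hA : 0 ≤ A)
    (hb : 0 ≤ b) (hf : ∀ u ∈ T, MemLp (f u) 2 P)
    (hinc : ∀ s ∈ T, ∀ t ∈ T, ∫ ω, (σ s * f s ω - σ t * f t ω) ^ 2 ∂P ≤ A * dist s t ^ b)
    {p q : E × E} (hp : p ∈ T ×ˢ T) (hq : q ∈ T ×ˢ T) {δ : ℝ}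
    (h : (dist p.1 q.1 ≤ δ ∧ dist p.2 q.2 ≤ δ) ∨ (dist p.1 p.2 ≤ δ ∧ dist q.1 q.2 ≤ δ)) :
    xiDist P f σ p q ≤ √(4 * A * δ ^ b) := by
  have hL2 : ∀ s ∈ T, ∀ t ∈ T, MemLp (fun ω => σ s * f s ω - σ t * f t ω) 2 P :=
    fun s hs t ht => ((hf s hs).const_mul _).sub ((hf t ht).const_mul _)
  have hle : ∀ s ∈ T, ∀ t ∈ T, dist s t ≤ δ →
      ∫ ω, (σ s * f s ω - σ t * f t ω) ^ 2 ∂P ≤ A * δ ^ b := fun s hs t ht hst =>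
    (hinc s hs t ht).trans (by gcongr)
  refine Real.sqrt_le_sqrt ?_
  rcases h with ⟨h1, h2⟩ | ⟨h1, h2⟩
  · have hpt : ∀ ω, (σ p.1 * f p.1 ω - σ p.2 * f p.2 ω) - (σ q.1 * f q.1 ω - σ q.2 * f q.2 ω) =
        (σ p.1 * f p.1 ω - σ q.1 * f q.1 ω) + (σ q.2 * f q.2 ω - σ p.2 * f p.2 ω) :=
      fun ω => by ring
    simp_rw [hpt]
    rw [dist_comm] at h2
    refine (integral_add_sq_le (hL2 _ hp.1 _ hq.1) (hL2 _ hq.2 _ hp.2)).trans ?_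
    linarith [hle _ hp.1 _ hq.1 h1, hle _ hq.2 _ hp.2 h2]
  · have hpt : ∀ ω, (σ p.1 * f p.1 ω - σ p.2 * f p.2 ω) - (σ q.1 * f q.1 ω - σ q.2 * f q.2 ω) =
        (σ p.1 * f p.1 ω - σ p.2 * f p.2 ω) + (σ q.2 * f q.2 ω - σ q.1 * f q.1 ω) :=
      fun ω => by ring
    simp_rw [hpt]
    refine (integral_add_sq_le (hL2 _ hp.1 _ hp.2) (hL2 _ hq.2 _ hq.1)).trans ?_
    rw [dist_comm] at h2
    linarith [hle _ hp.1 _ hp.2 h1, hle _ hq.2 _ hq.1 h2]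

lemma coverNumOn_le_card {α : Type*} {S : Set α} {D : α → α → ℝ} {ε : ℝ} {s : Finset α}
    (hs : ↑s ⊆ S) (hcov : ∀ x ∈ S, ∃ c ∈ s, D x c ≤ ε) : coverNumOn S D ε ≤ s.card :=
  Nat.sInf_le ⟨s, rfl, hs, hcov⟩

/-- **Entropy and diameter of the near-diagonal set under `d_ξ`.**  There are constants
`κ̃` (and `ε̃`), uniform over all `σ` in the class C1 and all fields `f` satisfying
C3–C4, such that for the set `U = {(s,t) ∈ T×T : |s−t| ≤ κ_m/N}` with the pseudo-metric
`d_ξ`: (i) for every `ε ∈ (0,1)`, `log N(ε) ≤ log κ̃ + (4d/β*) log(1/ε)`; and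
(ii) `diam_{d_ξ}(U) ≤ κ̃ N^{−β*/2}`. -/
theorem entropy_and_diameter_near_diagonal
    {Ω : Type*} [MeasurableSpace Ω] (P : Measure Ω) [IsProbabilityMeasure P]
    {d : ℕ} (T : Set (EuclideanSpace ℝ (Fin d)))
    (hT : IsCompact T) (hTne : T.Nonempty)
    (σl σu β κH β' κH' κm : ℝ)
    (hσl : 0 < σl) (hσ : σl ≤ σu) (hβ : 0 < β) (hκH : 0 < κH)
    (hβ' : 0 < β') (hκH' : 0 < κH') (hκm : 0 < κm) :
    ∃ κt > (0 : ℝ), ∀ f : EuclideanSpace ℝ (Fin d) → Ω → ℝ,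
      (∀ u, Measurable (f u)) →
      (∀ s : Finset (EuclideanSpace ℝ (Fin d)), ↑s ⊆ T →
        ∀ c : EuclideanSpace ℝ (Fin d) → ℝ, ∃ v : NNReal,
          Measure.map (fun ω => ∑ u ∈ s, c u * f u ω) P = gaussianReal 0 v) →
      (∀ u ∈ T, Measure.map (f u) P = gaussianReal 0 1) →
      (∀ᵐ ω ∂P, ContinuousOn (fun u => f u ω) T) →
      (∀ s ∈ T, ∀ u ∈ T, ∀ s' ∈ T, ∀ u' ∈ T,
        |(∫ ω, f u ω * f s ω ∂P) - (∫ ω, f u' ω * f s' ω ∂P)| ≤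
          κH' * (dist u u' ^ β' + dist s s' ^ β')) →
      ∀ σ : EuclideanSpace ℝ (Fin d) → ℝ,
        (∀ u ∈ T, σ u ∈ Set.Icc σl σu) →
        (∀ s ∈ T, ∀ u ∈ T, |σ u - σ s| ≤ κH * dist s u ^ β) →
      ∀ N : ℕ, 1 ≤ N →
        (∀ ε ∈ Set.Ioo (0 : ℝ) 1,
          Real.log ((coverNumOn (nearDiag d T κm N) (xiDist P f σ) ε : ℕ) : ℝ) ≤
            Real.log κt + (4 * (d : ℝ) / min β β') * Real.log (1 / ε)) ∧
        (⨆ p : ↥(nearDiag d T κm N), ⨆ q : ↥(nearDiag d T κm N),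
            xiDist P f σ p.1 q.1) ≤ κt * (N : ℝ) ^ (-(min β β' / 2)) := by
  obtain ⟨K, hK, hcover⟩ := exists_cover_card_le hT.isBounded
  obtain ⟨D, hD⟩ : ∃ D, ∀ s ∈ T, ∀ t ∈ T, dist s t ≤ D :=
    ⟨Metric.diam T, fun s hs t ht => Metric.dist_le_diam_of_mem hT.isBounded hs ht⟩
  have hD0 : 0 ≤ D := by
    obtain ⟨x, hx⟩ := hTne
    exact dist_nonneg.trans (hD x hx x hx)
  set b := min β β' with hb
  have hb0 : 0 < b := lt_min hβ hβ'
  have hbβ : b ≤ 2 * β := (min_le_left _ _).trans (by linarith)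
  have hbβ' : b ≤ β' := min_le_right _ _
  set A : ℝ := 2 * κH ^ 2 * D ^ (2 * β - b) + 4 * σu ^ 2 * κH' * D ^ (β' - b) + 1 with hA
  have hA1 : 1 ≤ A := le_add_of_nonneg_left (by positivity)
  have hA0 : 0 < A := by linarith
  set C₁ : ℝ := K * (4 * A) ^ (2 * (d : ℝ) / b) with hC₁
  set C₂ : ℝ := √(4 * A * κm ^ b) with hC₂
  have hC₁0 : 0 ≤ C₁ := by positivity
  have hC₂0 : 0 ≤ C₂ := Real.sqrt_nonneg _
  refine ⟨C₁ + C₂ + 1, by positivity, ?_⟩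
  intro f hf _ hf1 _ hr σ hσT hσH N hN
  have hL2 : ∀ u ∈ T, MemLp (f u) 2 P := fun u hu =>
    memLp_two_of_map_eq_gaussianReal (hf u) (hf1 u hu)
  have hsq : ∀ u ∈ T, ∫ ω, f u ω ^ 2 ∂P = 1 := fun u hu => by
    simpa using integral_sq_of_map_eq_gaussianReal (hf u) (hf1 u hu)
  have hinc : ∀ s ∈ T, ∀ t ∈ T,
      ∫ ω, (σ s * f s ω - σ t * f t ω) ^ 2 ∂P ≤ A * dist s t ^ b := by
    intro s hs t ht
    have hσst : |σ s - σ t| ≤ κH * dist s t ^ β := by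
      rw [abs_sub_comm]
      exact hσH s hs t ht
    refine (integral_sq_increment_le hβ' (hL2 s hs) (hL2 t ht) (hsq s hs) (hsq t ht)
      (hr s hs s hs t ht s hs) (hσl.le.trans (hσT t ht).1) (hσT t ht).2 hσst).trans ?_
    have h1 := mul_le_mul_of_nonneg_left
      (rpow_le_mul_rpow dist_nonneg (hD s hs t ht) hb0 hbβ) (by positivity : 0 ≤ 2 * κH ^ 2)
    have h2 := mul_le_mul_of_nonneg_left
      (rpow_le_mul_rpow dist_nonneg (hD s hs t ht) hb0 hbβ')
      (by positivity : 0 ≤ 4 * σu ^ 2 * κH')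
    have h3 : 0 ≤ dist s t ^ b := by positivity
    rw [hA]
    linarith
  have hsub : nearDiag d T κm N ⊆ T ×ˢ T := fun p hp => ⟨hp.1, hp.2.1⟩
  refine ⟨fun ε hε => ?_, ?_⟩
  · have hε0 : 0 < ε := hε.1
    set δ : ℝ := (ε ^ 2 / (4 * A)) ^ (1 / b) with hδ
    have hδ0 : 0 < δ := by positivity
    have hδ1 : δ ≤ 1 := by
      refine Real.rpow_le_one (by positivity) ?_ (by positivity)
      rw [div_le_one (by positivity)]
      nlinarith [hε.1, hε.2]
    have hδb : 4 * A * δ ^ b = ε ^ 2 := by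
      rw [hδ, ← Real.rpow_mul (by positivity), one_div, inv_mul_cancel₀ hb0.ne', Real.rpow_one]
      field_simp
    obtain ⟨s, hsU, hcard, hcov⟩ := hcover _ hsub δ hδ0 hδ1
    have hnum : ((coverNumOn (nearDiag d T κm N) (xiDist P f σ) ε : ℕ) : ℝ) ≤ s.card := by
      refine Nat.cast_le.2 (coverNumOn_le_card hsU fun x hx => ?_)
      obtain ⟨c, hc, hxc⟩ := hcov x hx
      refine ⟨c, hc, ?_⟩
      have := xiDist_le_sqrt hA0.le hb0.le hL2 hinc (hsub hx) (hsub (hsU hc)) (.inl hxc)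
      rwa [hδb, Real.sqrt_sq hε0.le] at this
    have hpow : K * (δ⁻¹) ^ (2 * d) = C₁ * (1 / ε) ^ (4 * (d : ℝ) / b) := by
      have h1 : (δ⁻¹) ^ (2 * d) = ((4 * A) * (1 / ε) ^ (2 : ℝ)) ^ (2 * (d : ℝ) / b) := by
        rw [hδ, ← Real.inv_rpow (by positivity), ← Real.rpow_natCast,
          ← Real.rpow_mul (by positivity), Real.rpow_two]
        congr 1
        · field_simp
        · push_cast
          ring
      rw [h1, Real.mul_rpow (by positivity) (by positivity), ← Real.rpow_mul (by positivity), hC₁,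
        mul_assoc]
      congr 3
      ring
    have hone : 1 ≤ (1 / ε) ^ (4 * (d : ℝ) / b) :=
      Real.one_le_rpow ((one_le_div hε0).2 hε.2.le) (by positivity)
    rw [← Real.log_rpow (by positivity), ← Real.log_mul (by positivity) (by positivity)]
    have hκ1 : 1 ≤ (C₁ + C₂ + 1) * (1 / ε) ^ (4 * (d : ℝ) / b) :=
      one_le_mul_of_one_le_of_one_le (by linarith) hone
    rcases Nat.eq_zero_or_pos (coverNumOn (nearDiag d T κm N) (xiDist P f σ) ε) with h0 | hpos
    · rw [h0, Nat.cast_zero, Real.log_zero]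
      exact Real.log_nonneg hκ1
    · refine Real.log_le_log (Nat.cast_pos.2 hpos) ((hnum.trans hcard).trans ?_)
      rw [hpow]
      gcongr
      linarith
  · have hN0 : (0 : ℝ) < N := by exact_mod_cast hN
    have hbound : √(4 * A * (κm / N) ^ b) ≤ (C₁ + C₂ + 1) * (N : ℝ) ^ (-(b / 2)) := by
      have heq : √(4 * A * (κm / N) ^ b) = C₂ * (N : ℝ) ^ (-(b / 2)) := by
        have hsqN : ((N : ℝ) ^ b)⁻¹ = ((N : ℝ) ^ (-(b / 2))) ^ 2 := by
          rw [← Real.rpow_neg hN0.le, ← Real.rpow_natCast, ← Real.rpow_mul hN0.le]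
          congr 1
          push_cast
          ring
        rw [Real.div_rpow hκm.le hN0.le, div_eq_mul_inv, ← mul_assoc,
          Real.sqrt_mul (by positivity), hsqN, Real.sqrt_sq (by positivity)]
      rw [heq]
      gcongr
      linarith
    have hnonneg : 0 ≤ (C₁ + C₂ + 1) * (N : ℝ) ^ (-(b / 2)) := by positivity
    refine Real.iSup_le (fun p => Real.iSup_le (fun q => ?_) hnonneg) hnonneg
    exact (xiDist_le_sqrt hA0.le hb0.le hL2 hinc (hsub p.2) (hsub q.2)
      (.inr ⟨p.2.2.2, q.2.2.2⟩)).trans hbound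
end
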